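/- For θ ∈ L²(𝕋^{d+1}), the equation ∂_s β(ξ,s) − (A(s)β(·,s))(ξ) = θ(ξ,s) has a time-periodic solution β ∈ L²(𝕋^{d+1}) ∩ H¹((0,1); L²(𝕋^d)) if and only if ∫₀¹ ∫_{𝕋^d} θ(ξ,s) dξ ds = 0; moreover, any two such solutions differ by an additive constant. -/

import Mathlib

open MeasureTheory

noncomputable section

/-- The periodicity cell `[0,1)^d`, identified with the torus `𝕋^d`. -/
def cube (d : ℕ) : Set (Fin d → ℝ) := Set.univ.pi fun _ => Set.Ico (0 : ℝ) 1

/-- The operator `A(s)` applied pointwise. -/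
def Aop {d : ℕ} (a : (Fin d → ℝ) → ℝ) (μ : (Fin d → ℝ) → (Fin d → ℝ) → ℝ → ℝ)
    (s : ℝ) (v : (Fin d → ℝ) → ℝ) (ξ : Fin d → ℝ) : ℝ :=
  ∫ η, a (ξ - η) * μ ξ η s * (v η - v ξ)

/-- `β` is a time-periodic solution, in `L²(𝕋^{d+1}) ∩ H¹((0,1); L²(𝕋^d))`, of
`∂_s β - A(s)β = θ` (in the equivalent integrated-in-time formulation). -/
def IsCellSol {d : ℕ} (a : (Fin d → ℝ) → ℝ) (μ : (Fin d → ℝ) → (Fin d → ℝ) → ℝ → ℝ)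
    (θ : (Fin d → ℝ) → ℝ → ℝ) (β : (Fin d → ℝ) → ℝ → ℝ) : Prop :=
  Measurable (fun p : (Fin d → ℝ) × ℝ => β p.1 p.2) ∧
  (∀ ξ s, ∀ k : Fin d → ℤ, β (ξ + fun i => (k i : ℝ)) s = β ξ s) ∧
  (∀ ξ s, β ξ (s + 1) = β ξ s) ∧
  IntegrableOn (fun p : (Fin d → ℝ) × ℝ => (β p.1 p.2) ^ 2)
    (cube d ×ˢ Set.Ioo (0 : ℝ) 1) ∧
  (∀ᵐ ξ ∂(volume : Measure (Fin d → ℝ)), ∀ s ∈ Set.Icc (0 : ℝ) 1,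
    β ξ s = β ξ 0 + ∫ τ in (0 : ℝ)..s, (Aop a μ τ (fun η => β η τ) ξ + θ ξ τ))

/-!
The operator `A` acts on `L²(𝕋^d × 𝕋)` with `⟪A f, f⟫` bounded above by a negative multiple of the
mean square increment of `f` along jumps drawn from `a`. The size of the increments is subadditive
in the displacement, and a compact subset of `{a ≥ δ}` of positive measure meets all its small
translates in a set of measure bounded below. So the increments along jumps control those along
small displacements, and by subadditivity those between all pairs of points with the same time
coordinate. Hence `A` minus a multiple of the spatial mean is coercive, and the equation with this
coercive operator is solved by a Neumann series around the resolvent of `∂_s`, which is an average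
over past times with exponential weights and hence a contraction. The subtracted mean depends on
time alone and has zero average when `θ` does, so adding its primitive in time to the solution
yields a solution for `A`. Testing the equation with `1` gives the necessity of the mean condition,
and testing the equation for a difference `β` of solutions with `β` itself shows that `β` does not
depend on space; then `A β = 0`, so it does not depend on time either.
-/

open Filter Set
open scoped ENNReal RealInnerProductSpace InnerProduct

section Lift

variable {X Z : Type*} [MeasurableSpace X] [MeasurableSpace Z]
  {π : Measure X} [IsProbabilityMeasure π] (α : Measure Z) [IsProbabilityMeasure α]

lemma integrable_coeFn_L2 (f : X →₂[π] ℝ) : Integrable f π :=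
  (Lp.memLp f).integrable one_le_two

/-- The isometry `f ↦ ((z, p) ↦ f p)` from `L²(π)` to `L²(α ⊗ π)`. -/
def lift : (X →₂[π] ℝ) →L[ℝ] ((Z × X) →₂[α.prod π] ℝ) :=
  (Lp.compMeasurePreservingₗᵢ ℝ Prod.snd measurePreserving_snd).toContinuousLinearMap

@[simp]
lemma norm_lift (f : X →₂[π] ℝ) : ‖lift α f‖ = ‖f‖ :=
  LinearIsometry.norm_map _ f

lemma lift_ae (f : X →₂[π] ℝ) : lift α f =ᵐ[α.prod π] fun q => f q.2 :=
  Lp.coeFn_compMeasurePreserving f measurePreserving_snd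

lemma lift_indicatorConstLp {s : Set X} (hs : MeasurableSet s) :
    lift α (indicatorConstLp 2 hs (measure_ne_top π s) (1 : ℝ)) =
      indicatorConstLp 2 (measurable_snd hs) (measure_ne_top (α.prod π) _) 1 :=
  Lp.indicatorConstLp_compMeasurePreserving hs (measure_ne_top π s) 1 measurePreserving_snd

/-- Integration over the first variable, from `L²(α ⊗ π)` to `L²(π)`. -/
def fiberMean : ((Z × X) →₂[α.prod π] ℝ) →L[ℝ] (X →₂[π] ℝ) :=
  (lift α)†

lemma inner_fiberMean_left (F : (Z × X) →₂[α.prod π] ℝ) (f : X →₂[π] ℝ) :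
    ⟪fiberMean α F, f⟫ = ⟪F, lift α f⟫ :=
  ContinuousLinearMap.adjoint_inner_left _ _ _

lemma inner_fiberMean_right (f : X →₂[π] ℝ) (F : (Z × X) →₂[α.prod π] ℝ) :
    ⟪f, fiberMean α F⟫ = ⟪lift α f, F⟫ :=
  ContinuousLinearMap.adjoint_inner_right _ _ _

lemma norm_fiberMean_le : ‖(fiberMean α : _ →L[ℝ] (X →₂[π] ℝ))‖ ≤ 1 := by
  rw [fiberMean, LinearIsometryEquiv.norm_map]
  exact LinearIsometry.norm_toContinuousLinearMap_le _

@[simp]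
lemma fiberMean_lift (f : X →₂[π] ℝ) : fiberMean α (lift α f) = f :=
  ext_inner_left ℝ fun g => by
    rw [inner_fiberMean_right]
    exact LinearIsometry.inner_map_map _ g f

lemma fiberMean_ae (F : (Z × X) →₂[α.prod π] ℝ) :
    fiberMean α F =ᵐ[π] fun p => ∫ z, F (z, p) ∂α := by
  have hF := integrable_coeFn_L2 F
  refine Integrable.ae_eq_of_forall_setIntegral_eq _ _ (integrable_coeFn_L2 _)
    hF.integral_prod_right fun s hs _ => ?_
  calc ∫ p in s, fiberMean α F p ∂π
      = ⟪indicatorConstLp 2 hs (measure_ne_top π s) (1 : ℝ), fiberMean α F⟫ :=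
        (L2.inner_indicatorConstLp_one hs _ _).symm
    _ = ∫ q in Prod.snd ⁻¹' s, F q ∂(α.prod π) := by
        rw [inner_fiberMean_right, lift_indicatorConstLp, L2.inner_indicatorConstLp_one]
    _ = ∫ p in s, ∫ z, F (z, p) ∂α ∂π := by
        rw [← univ_prod, ← Measure.prod_restrict, Measure.restrict_univ]
        refine integral_prod_symm _ (hF.mono_measure ?_)
        gcongr
        exact Measure.restrict_le_self

lemma ae_ae_of_ae_prod_swap {P : Z × X → Prop} (h : ∀ᵐ q ∂(α.prod π), P q) :
    ∀ᵐ p ∂π, ∀ᵐ z ∂α, P (z, p) :=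
  Measure.ae_ae_of_ae_prod (Measure.measurePreserving_swap.quasiMeasurePreserving.ae h)

end Lift

section Displacement

variable {X Z : Type*} [AddCommGroup X] [MeasurableSpace X] [MeasurableAdd₂ X] [MeasurableSpace Z]
  {π : Measure X} [IsProbabilityMeasure π] [π.IsAddLeftInvariant]
  {α : Measure Z} [IsProbabilityMeasure α] {e : Z → X} (he : Measurable e)

include he in
variable (α) in
lemma measurePreserving_add_displacement :
    MeasurePreserving (fun q : Z × X => q.2 + e q.1) (α.prod π) π :=
  measurePreserving_snd.comp <| (MeasurePreserving.id α).skew_product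
    (g := fun z p => p + e z) (measurable_snd.add (he.comp measurable_fst))
    (.of_forall fun z => (measurePreserving_add_right π (e z)).map_eq)

variable (α) in
/-- The isometry `f ↦ ((z, p) ↦ f (p + e z))` from `L²(π)` to `L²(α ⊗ π)`, for a displacement
`e z` depending on a random variable `z` of law `α`. -/
def displace : (X →₂[π] ℝ) →L[ℝ] ((Z × X) →₂[α.prod π] ℝ) :=
  (Lp.compMeasurePreservingₗᵢ ℝ _
    (measurePreserving_add_displacement α he)).toContinuousLinearMap

@[simp]
lemma norm_displace (f : X →₂[π] ℝ) : ‖displace α he f‖ = ‖f‖ :=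
  LinearIsometry.norm_map _ f

lemma displace_ae (f : X →₂[π] ℝ) : displace α he f =ᵐ[α.prod π] fun q => f (q.2 + e q.1) :=
  Lp.coeFn_compMeasurePreserving f (measurePreserving_add_displacement α he)

variable (α) in
/-- The increment operator `f ↦ ((z, p) ↦ f (p + e z) - f p)` from `L²(π)` to `L²(α ⊗ π)`. -/
def increment : (X →₂[π] ℝ) →L[ℝ] ((Z × X) →₂[α.prod π] ℝ) :=
  displace α he - lift α

lemma increment_apply (f : X →₂[π] ℝ) : increment α he f = displace α he f - lift α f := rfl

lemma increment_ae (f : X →₂[π] ℝ) :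
    increment α he f =ᵐ[α.prod π] fun q => f (q.2 + e q.1) - f q.2 := by
  filter_upwards [Lp.coeFn_sub (displace α he f) (lift α f), displace_ae he f, lift_ae α f]
    with q hsub hdisp hlift
  rw [← hdisp, ← hlift, ← Pi.sub_apply, ← hsub]
  rfl

variable (α) in
/-- The averaging operator `f ↦ (p ↦ ∫ z, f (p + e z) ∂α)` on `L²(π)`. -/
def averageOp : (X →₂[π] ℝ) →L[ℝ] (X →₂[π] ℝ) :=
  fiberMean α ∘L displace α he

lemma norm_averageOp_le : ‖(averageOp α he : (X →₂[π] ℝ) →L[ℝ] _)‖ ≤ 1 :=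
  (ContinuousLinearMap.opNorm_comp_le _ _).trans <| mul_le_one₀ (norm_fiberMean_le α)
    (norm_nonneg _) (LinearIsometry.norm_toContinuousLinearMap_le _)

lemma averageOp_ae (f : X →₂[π] ℝ) : averageOp α he f =ᵐ[π] fun p => ∫ z, f (p + e z) ∂α := by
  filter_upwards [fiberMean_ae α (displace α he f),
    ae_ae_of_ae_prod_swap α (displace_ae he f)] with p hmean hdisp
  exact hmean.trans (integral_congr_ae hdisp)

lemma norm_increment_sq (f : X →₂[π] ℝ) :
    ‖increment α he f‖ ^ 2 = 2 * (‖f‖ ^ 2 - ⟪averageOp α he f, f⟫) := by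
  rw [increment_apply, norm_sub_sq_real, norm_displace, norm_lift,
    averageOp, ContinuousLinearMap.comp_apply, inner_fiberMean_left]
  ring

lemma norm_increment_comp {W : Type*} [MeasurableSpace W] {ω : Measure W} [IsProbabilityMeasure ω]
    {c : W → Z} (hc : MeasurePreserving c ω α) (f : X →₂[π] ℝ) :
    ‖increment ω (he.comp hc.measurable) f‖ = ‖increment α he f‖ := by
  have hprod := hc.prod (MeasurePreserving.id π)
  rw [← Lp.norm_compMeasurePreserving _ hprod]
  congr 1
  refine Lp.ext ?_
  filter_upwards [increment_ae (α := ω) (he.comp hc.measurable) f,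
    Lp.coeFn_compMeasurePreserving (increment α he f) hprod,
    hprod.quasiMeasurePreserving.ae (increment_ae (α := α) he f)] with q hleft hcomp hright
  exact (hleft.trans hright.symm).trans hcomp.symm

lemma averageOp_eq_self_of_increment_eq_zero {f : X →₂[π] ℝ} (hf : increment α he f = 0) :
    averageOp α he f = f := by
  have : displace α he f = lift α f := sub_eq_zero.mp hf
  rw [averageOp, ContinuousLinearMap.comp_apply, this, fiberMean_lift]

/-- Multiplication of an `L²` function by the bounded function `m`. -/
def mulOp {Y : Type*} [MeasurableSpace Y] {ν : Measure Y} (m : Lp ℝ ∞ ν) :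
    (Y →₂[ν] ℝ) →L[ℝ] (Y →₂[ν] ℝ) :=
  (ContinuousLinearMap.mul ℝ ℝ).holderL ν ∞ 2 2 m

lemma mulOp_ae {Y : Type*} [MeasurableSpace Y] {ν : Measure Y} (m : Lp ℝ ∞ ν) (F : Y →₂[ν] ℝ) :
    mulOp m F =ᵐ[ν] fun y => m y * F y :=
  (ContinuousLinearMap.mul ℝ ℝ).coeFn_holder m F

lemma mul_norm_sq_le_inner_mulOp {Y : Type*} [MeasurableSpace Y] {ν : Measure Y} {m : Lp ℝ ∞ ν}
    {c : ℝ} (hc : ∀ᵐ y ∂ν, c ≤ m y) (F : Y →₂[ν] ℝ) : c * ‖F‖ ^ 2 ≤ ⟪mulOp m F, F⟫ := by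
  rw [← real_inner_self_eq_norm_sq, ← real_inner_smul_left, L2.inner_def, L2.inner_def]
  refine integral_mono_ae (L2.integrable_inner _ _) (L2.integrable_inner _ _) ?_
  filter_upwards [hc, mulOp_ae m F, Lp.coeFn_smul c F] with y hcy hmul hsmul
  simp only [hmul, hsmul, Pi.smul_apply, smul_eq_mul, RCLike.inner_apply, conj_trivial]
  nlinarith [mul_self_nonneg (F y)]

variable (α) in
/-- The generator of the jumps `p ↦ p + e z`, where `z` has law `α` and rate `r (z, p)`. -/
def jumpIntegral (e : Z → X) (r : Z × X → ℝ) (u : X → ℝ) (p : X) : ℝ :=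
  ∫ z, r (z, p) * (u (p + e z) - u p) ∂α

/-- The operator induced by `jumpIntegral` on `L²(π)`, for a bounded jump rate `m`. -/
def jumpOp (m : Lp ℝ ∞ (α.prod π)) : (X →₂[π] ℝ) →L[ℝ] (X →₂[π] ℝ) :=
  fiberMean α ∘L mulOp m ∘L increment α he

lemma jumpOp_ae {m : Lp ℝ ∞ (α.prod π)} {r : Z × X → ℝ} (hmr : m =ᵐ[α.prod π] r) {f : X →₂[π] ℝ}
    {u : X → ℝ} (hfu : f =ᵐ[π] u) :
    jumpOp he m f =ᵐ[π] jumpIntegral α e r u := by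
  have hrate : mulOp m (increment α he f)
      =ᵐ[α.prod π] fun q => r q * (u (q.2 + e q.1) - u q.2) := by
    filter_upwards [mulOp_ae m (increment α he f), increment_ae he f, hmr,
      (measurePreserving_add_displacement α he).quasiMeasurePreserving.ae hfu,
      measurePreserving_snd.quasiMeasurePreserving.ae hfu] with q hmul hinc hm hdisp hq
    rw [hmul, hinc, hm, hdisp, hq]
  filter_upwards [fiberMean_ae α _, ae_ae_of_ae_prod_swap α hrate] with p hmean hrate
  exact hmean.trans (integral_congr_ae hrate)

lemma jumpOp_eq_zero_of_increment_eq_zero (m : Lp ℝ ∞ (α.prod π)) {f : X →₂[π] ℝ}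
    (hf : increment α he f = 0) : jumpOp he m f = 0 := by
  simp only [jumpOp, ContinuousLinearMap.comp_apply, hf, map_zero]

end Displacement

section Symmetric

variable {X Z : Type*} [AddCommGroup X] [MeasurableSpace X] [MeasurableAdd₂ X]
  [AddCommGroup Z] [MeasurableSpace Z] [MeasurableNeg Z]
  {π : Measure X} [IsProbabilityMeasure π] [π.IsAddLeftInvariant]
  {α : Measure Z} [IsProbabilityMeasure α] [α.IsNegInvariant]
  {e : Z →+ X} (he : Measurable e)

/-- Reversal of a jump: the jump `z` from `p` becomes the jump `-z` from `p + e z`. -/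
def reverseJump (e : Z →+ X) (q : Z × X) : Z × X := (-q.1, q.2 + e q.1)

include he in
lemma measurePreserving_reverseJump :
    MeasurePreserving (reverseJump e) (α.prod π) (α.prod π) :=
  (Measure.measurePreserving_neg α).skew_product (g := fun z p => p + e z)
    (measurable_snd.add (he.comp measurable_fst))
    (.of_forall fun z => (measurePreserving_add_right π (e z)).map_eq)

/-- The isometry of `L²(α ⊗ π)` induced by reversal of the jumps. -/
def reverseOp : ((Z × X) →₂[α.prod π] ℝ) →ₗᵢ[ℝ] ((Z × X) →₂[α.prod π] ℝ) :=
  Lp.compMeasurePreservingₗᵢ ℝ _ (measurePreserving_reverseJump he)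

lemma reverseOp_ae (F : (Z × X) →₂[α.prod π] ℝ) :
    reverseOp he F =ᵐ[α.prod π] F ∘ reverseJump e :=
  Lp.coeFn_compMeasurePreserving F (measurePreserving_reverseJump he)

lemma reverseOp_lift (f : X →₂[π] ℝ) : reverseOp he (lift α f) = displace α he f :=
  (Lp.compMeasurePreserving_comp_apply f measurePreserving_snd
    (measurePreserving_reverseJump he)).symm

lemma reverseOp_displace (f : X →₂[π] ℝ) : reverseOp he (displace α he f) = lift α f := by
  refine Lp.ext ?_
  filter_upwards [reverseOp_ae he (displace α he f), lift_ae α f,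
    (measurePreserving_reverseJump he).quasiMeasurePreserving.ae (displace_ae (α := α) he f)]
    with q hrev hlift hdisp
  rw [hrev, hlift, Function.comp_apply, hdisp]
  simp [reverseJump]

lemma reverseOp_increment (f : X →₂[π] ℝ) :
    reverseOp he (increment α he f) = -increment α he f := by
  rw [increment_apply, map_sub, reverseOp_lift, reverseOp_displace, neg_sub]

lemma reverseOp_mulOp {m : Lp ℝ ∞ (α.prod π)} (hm : m ∘ reverseJump e =ᵐ[α.prod π] m)
    (F : (Z × X) →₂[α.prod π] ℝ) : reverseOp he (mulOp m F) = mulOp m (reverseOp he F) := by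
  refine Lp.ext ?_
  filter_upwards [reverseOp_ae he (mulOp m F), mulOp_ae m (reverseOp he F), reverseOp_ae he F,
    (measurePreserving_reverseJump he).quasiMeasurePreserving.ae (mulOp_ae m F), hm]
    with q hrevmul hmulrev hrev hmul hmq
  rw [hrevmul, hmulrev, hrev, Function.comp_apply, hmul, Function.comp_apply, ← hmq,
    Function.comp_apply]

/-- Reversing the jumps exchanges their endpoints, hence changes the sign of all increments. -/
lemma inner_jumpOp {m : Lp ℝ ∞ (α.prod π)} (hm : m ∘ reverseJump e =ᵐ[α.prod π] m)
    (f g : X →₂[π] ℝ) :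
    ⟪jumpOp he m f, g⟫ = -(1 / 2) * ⟪mulOp m (increment α he f), increment α he g⟫ := by
  have hlift : ⟪jumpOp he m f, g⟫ = ⟪mulOp m (increment α he f), lift α g⟫ :=
    inner_fiberMean_left α _ g
  have hdisp : ⟪jumpOp he m f, g⟫ = -⟪mulOp m (increment α he f), displace α he g⟫ := by
    rw [hlift, ← (reverseOp he).inner_map_map, reverseOp_mulOp he hm, reverseOp_increment,
      reverseOp_lift, map_neg, inner_neg_left]
  rw [increment_apply he g, inner_sub_right]
  linarith

lemma inner_jumpOp_self_le {m : Lp ℝ ∞ (α.prod π)} (hm : m ∘ reverseJump e =ᵐ[α.prod π] m)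
    {c : ℝ} (hc : ∀ᵐ q ∂(α.prod π), c ≤ m q) (f : X →₂[π] ℝ) :
    ⟪jumpOp he m f, f⟫ ≤ -(c / 2) * ‖increment α he f‖ ^ 2 := by
  rw [inner_jumpOp he hm]
  linarith [mul_norm_sq_le_inner_mulOp hc (increment α he f)]

lemma integral_jumpOp {m : Lp ℝ ∞ (α.prod π)} (hm : m ∘ reverseJump e =ᵐ[α.prod π] m)
    (f : X →₂[π] ℝ) : ∫ p, jumpOp he m f p ∂π = 0 := by
  let one : X →₂[π] ℝ := Lp.const 2 π 1
  have hone : increment α he one = 0 := by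
    rw [increment_apply, sub_eq_zero]
    exact Lp.ext (by rfl)
  calc ∫ p, jumpOp he m f p ∂π = ⟪jumpOp he m f, one⟫ := by
        rw [L2.inner_def]
        refine integral_congr_ae ?_
        filter_upwards [Lp.coeFn_const (p := 2) (μ := π) (1 : ℝ)] with p hp
        rw [hp, Function.const_apply, RCLike.inner_apply, conj_trivial, one_mul]
    _ = 0 := by rw [inner_jumpOp he hm, hone, inner_zero_right, mul_zero]

end Symmetric

section Subadditive

open scoped Pointwise

/-- An even subadditive function with values in `[0, ∞]`, such as the size of the increment of a
given function under the translation by `x`. -/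
structure IsEvenSubadditive {G : Type*} [AddGroup G] (D : G → ℝ≥0∞) : Prop where
  add_le : ∀ x y, D (x + y) ≤ D x + D y
  neg : ∀ x, D (-x) = D x

lemma IsEvenSubadditive.succ_nsmul_le {G : Type*} [AddGroup G] {D : G → ℝ≥0∞}
    (hD : IsEvenSubadditive D) (n : ℕ) (x : G) : D ((n + 1) • x) ≤ (n + 1) * D x := by
  induction n with
  | zero => simp
  | succ n ih =>
    calc D ((n + 1 + 1) • x) = D ((n + 1) • x + x) := by rw [succ_nsmul x (n + 1)]
      _ ≤ D ((n + 1) • x) + D x := hD.add_le _ _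
      _ ≤ (n + 1) * D x + D x := by gcongr
      _ = (↑(n + 1) + 1) * D x := by push_cast; ring

/-- Every `z ∈ (x + K) ∩ K` splits `x` as `z - (z - x)` with both `z` and `z - x` in `K`. -/
lemma IsEvenSubadditive.sq_mul_measure_inter_le {G : Type*} [AddCommGroup G] [MeasurableSpace G]
    [MeasurableAdd G] {ν : Measure G} [ν.IsAddLeftInvariant] {D : G → ℝ≥0∞}
    (hD : IsEvenSubadditive D) (hmeas : Measurable D) {K : Set G} (hK : MeasurableSet K) (x : G) :
    D x ^ 2 * ν ((x +ᵥ K) ∩ K) ≤ 4 * ∫⁻ z in K, D z ^ 2 ∂ν := by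
  have htranslate : ∫⁻ z in x +ᵥ K, D (z - x) ^ 2 ∂ν = ∫⁻ z in K, D z ^ 2 ∂ν := by
    rw [← lintegral_indicator (hK.const_vadd x), ← lintegral_indicator hK,
      ← lintegral_add_left_eq_self _ x]
    refine lintegral_congr fun z => ?_
    have hz : x + z ∈ x +ᵥ K ↔ z ∈ K := vadd_mem_vadd_set_iff
    by_cases hzK : z ∈ K <;> simp [hz, hzK]
  have hsplit (z : G) : D x ^ 2 ≤ 2 * D z ^ 2 + 2 * D (z - x) ^ 2 := by
    calc D x ^ 2 = D (z + -(z - x)) ^ 2 := by congr 2; abel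
      _ ≤ (D z + D (z - x)) ^ 2 := by
        gcongr
        exact (hD.add_le _ _).trans_eq (by rw [hD.neg])
      _ ≤ 2 * D z ^ 2 + 2 * D (z - x) ^ 2 := by
        have := ENNReal.rpow_add_le_mul_rpow_add_rpow (D z) (D (z - x)) one_le_two
        norm_num [mul_add] at this ⊢
        exact this
  calc D x ^ 2 * ν ((x +ᵥ K) ∩ K) = ∫⁻ _ in (x +ᵥ K) ∩ K, D x ^ 2 ∂ν := by rw [setLIntegral_const]
    _ ≤ ∫⁻ z in (x +ᵥ K) ∩ K, (2 * D z ^ 2 + 2 * D (z - x) ^ 2) ∂ν := lintegral_mono hsplit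
    _ = 2 * ∫⁻ z in (x +ᵥ K) ∩ K, D z ^ 2 ∂ν + 2 * ∫⁻ z in (x +ᵥ K) ∩ K, D (z - x) ^ 2 ∂ν := by
        rw [lintegral_add_left ((hmeas.pow_const 2).const_mul 2),
          lintegral_const_mul' _ _ ENNReal.ofNat_ne_top,
          lintegral_const_mul' _ _ ENNReal.ofNat_ne_top]
    _ ≤ 2 * ∫⁻ z in K, D z ^ 2 ∂ν + 2 * ∫⁻ z in x +ᵥ K, D (z - x) ^ 2 ∂ν := by
        gcongr
        · exact inter_subset_right
        · exact inter_subset_left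
    _ = 4 * ∫⁻ z in K, D z ^ 2 ∂ν := by rw [htranslate, ← add_mul]; norm_num

lemma setLIntegral_le_inv_mul_lintegral_withDensity {Y : Type*} [MeasurableSpace Y]
    {ν : Measure Y} {f g : Y → ℝ≥0∞} (hf : Measurable f) (hg : Measurable g)
    {K : Set Y} {δ : ℝ≥0∞} (hδ : δ ≠ 0) (hδ' : δ ≠ ∞)
    (hK : ∀ z ∈ K, δ ≤ f z) :
    ∫⁻ z in K, g z ∂ν ≤ δ⁻¹ * ∫⁻ z, g z ∂(ν.withDensity f) := by
  rw [← ENNReal.mul_le_iff_le_inv hδ hδ', lintegral_withDensity_eq_lintegral_mul _ hf hg,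
    ← lintegral_const_mul _ hg]
  exact (setLIntegral_mono (hf.mul hg) fun z hz => mul_le_mul_left (hK z hz) _).trans
    (setLIntegral_le_lintegral K _)

variable {E : Type*} [NormedAddCommGroup E] [MeasurableSpace E] [BorelSpace E]
  {ν : Measure E} [ν.IsAddHaarMeasure]

lemma exists_isCompact_forall_le_of_lintegral_ne_zero [LocallyCompactSpace E]
    [SecondCountableTopology E] {f : E → ℝ≥0∞} (hf : Measurable f) (hf0 : ∫⁻ z, f z ∂ν ≠ 0) :
    ∃ K, IsCompact K ∧ ν K ≠ 0 ∧ ∃ δ ≠ 0, δ ≠ ∞ ∧ ∀ z ∈ K, δ ≤ f z := by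
  obtain ⟨δ, hδ, hlevel⟩ : ∃ δ ≠ 0, ν {z | δ ≤ f z} ≠ 0 := by
    by_contra! hnull
    refine hf0 ((lintegral_eq_zero_iff hf).2 (measure_mono_null (fun z (hz : f z ≠ 0) => ?_)
      (measure_iUnion_null fun n : ℕ => hnull (n : ℝ≥0∞)⁻¹ (by simp))))
    obtain ⟨n, hn⟩ := ENNReal.exists_inv_nat_lt hz
    exact mem_iUnion.2 ⟨n, hn.le⟩
  obtain ⟨K, hKsub, hK, hKpos⟩ :=
    (measurableSet_le measurable_const hf).exists_lt_isCompact (pos_iff_ne_zero.2 hlevel)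
  exact ⟨K, hK, hKpos.ne', min δ 1, by simp [hδ], by simp, fun z hz =>
    (min_le_left δ 1).trans (hKsub hz)⟩

lemma exists_forall_half_measure_le_measure_inter [LocallyCompactSpace E]
    [SecondCountableTopology E] {K : Set E} (hK : IsCompact K) (hK0 : ν K ≠ 0) :
    ∃ r > 0, ∀ x : E, ‖x‖ < r → ν K / 2 ≤ ν ((x +ᵥ K) ∩ K) := by
  have hsdiff : ∀ᶠ x in nhds (0 : E), ν ((x +ᵥ K) \ K) < ν K / 2 :=
    (tendsto_measure_vadd_sdiff_isCompact_isClosed hK hK.isClosed).eventually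
      (gt_mem_nhds (ENNReal.half_pos hK0))
  obtain ⟨r, hr, hball⟩ := Metric.eventually_nhds_iff.1 hsdiff
  have hfin : ν K / 2 ≠ ∞ := ENNReal.div_ne_top hK.measure_ne_top two_ne_zero
  refine ⟨r, hr, fun x hx => (ENNReal.add_le_add_iff_right hfin).1 ?_⟩
  calc ν K / 2 + ν K / 2 = ν (x +ᵥ K) := by rw [ENNReal.add_halves, measure_vadd]
    _ = ν ((x +ᵥ K) ∩ K) + ν ((x +ᵥ K) \ K) := (measure_inter_add_sdiff _ hK.measurableSet).symm
    _ ≤ ν ((x +ᵥ K) ∩ K) + ν K / 2 := by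
        gcongr
        exact (hball (by simpa using hx)).le

/-- By the Steinhaus argument the mean square of `D` against any nontrivial density controls `D`
near `0`, and subadditivity propagates the bound to every ball. -/
lemma exists_forall_sq_le_lintegral_withDensity [NormedSpace ℝ E] [FiniteDimensional ℝ E]
    {f : E → ℝ≥0∞} (hf : Measurable f) (hf0 : ∫⁻ z, f z ∂ν ≠ 0) (R : ℝ) :
    ∃ C ≠ ∞, ∀ D : E → ℝ≥0∞, Measurable D → IsEvenSubadditive D → ∀ x, ‖x‖ ≤ R →
      D x ^ 2 ≤ C * ∫⁻ z, D z ^ 2 ∂(ν.withDensity f) := by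
  have := FiniteDimensional.proper_real E
  obtain ⟨K, hK, hK0, δ, hδ, hδ', hKf⟩ := exists_isCompact_forall_le_of_lintegral_ne_zero hf hf0
  obtain ⟨r, hr, hinter⟩ := exists_forall_half_measure_le_measure_inter hK hK0
  obtain ⟨n, hn⟩ := exists_nat_gt (R / r)
  have hhalf0 : ν K / 2 ≠ 0 := (ENNReal.half_pos hK0).ne'
  have hhalf : ν K / 2 ≠ ∞ := ENNReal.div_ne_top hK.measure_ne_top two_ne_zero
  refine ⟨(n + 1) ^ 2 * ((ν K / 2)⁻¹ * (4 * δ⁻¹)), by finiteness, fun D hmeas hD x hx => ?_⟩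
  set I := ∫⁻ z, D z ^ 2 ∂(ν.withDensity f)
  have hnear (y : E) (hy : ‖y‖ < r) : D y ^ 2 ≤ (ν K / 2)⁻¹ * (4 * δ⁻¹) * I := by
    rw [mul_assoc, ← ENNReal.mul_le_iff_le_inv hhalf0 hhalf, mul_comm]
    calc D y ^ 2 * (ν K / 2) ≤ D y ^ 2 * ν ((y +ᵥ K) ∩ K) := by
          gcongr
          exact hinter y hy
      _ ≤ 4 * ∫⁻ z in K, D z ^ 2 ∂ν := hD.sq_mul_measure_inter_le hmeas hK.measurableSet y
      _ ≤ 4 * (δ⁻¹ * I) := by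
          gcongr
          exact setLIntegral_le_inv_mul_lintegral_withDensity hf (hmeas.pow_const 2) hδ hδ' hKf
      _ = 4 * δ⁻¹ * I := (mul_assoc _ _ _).symm
  obtain ⟨y, hy, rfl⟩ : ∃ y, ‖y‖ < r ∧ x = (n + 1) • y := by
    refine ⟨(n + 1 : ℝ)⁻¹ • x, ?_, ?_⟩
    · rw [norm_smul, norm_inv, Real.norm_of_nonneg (by positivity), inv_mul_lt_iff₀ (by positivity)]
      linarith [(div_lt_iff₀ hr).1 hn]
    · rw [← Nat.cast_smul_eq_nsmul ℝ, smul_smul, Nat.cast_succ, mul_inv_cancel₀ (by positivity),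
        one_smul]
  calc D ((n + 1) • y) ^ 2 ≤ ((n + 1) * D y) ^ 2 := by
        gcongr
        exact hD.succ_nsmul_le n y
    _ ≤ (n + 1) ^ 2 * ((ν K / 2)⁻¹ * (4 * δ⁻¹) * I) := by
        rw [mul_pow]
        gcongr
        exact hnear y hy
    _ = (n + 1) ^ 2 * ((ν K / 2)⁻¹ * (4 * δ⁻¹)) * I := (mul_assoc _ _ _).symm

end Subadditive

section Comparison

variable {X Z : Type*} [AddCommGroup X] [MeasurableSpace X] {π : Measure X}

/-- The `L²(π)` size of the increments of `f` under the displacement `e z`. -/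
def incrementSize (π : Measure X) (e : Z → X) (f : X → ℝ) (z : Z) : ℝ≥0∞ :=
  eLpNorm (fun p => f (p + e z) - f p) 2 π

lemma incrementSize_sq (e : Z → X) (f : X → ℝ) (z : Z) :
    incrementSize π e f z ^ 2 = ∫⁻ p, ‖f (p + e z) - f p‖ₑ ^ 2 ∂π := by
  have := eLpNorm_nnreal_pow_eq_lintegral (μ := π) (p := 2) (f := fun p => f (p + e z) - f p)
    two_ne_zero
  simpa [incrementSize] using this

variable [MeasurableAdd₂ X]

lemma measurable_incrementSize [MeasurableSpace Z] [SFinite π] {e : Z → X} (he : Measurable e)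
    {f : X → ℝ} (hf : Measurable f) : Measurable (incrementSize π e f) := by
  have hsq : Measurable fun z => incrementSize π e f z ^ 2 := by
    simp only [incrementSize_sq]
    exact Measurable.lintegral_prod_right' (f := fun q : Z × X => ‖f (q.2 + e q.1) - f q.2‖ₑ ^ 2)
      (by fun_prop)
  convert! hsq.pow_const (1 / 2 : ℝ) with z
  rw [← ENNReal.rpow_natCast, ← ENNReal.rpow_mul]
  norm_num

variable [π.IsAddLeftInvariant]

lemma isEvenSubadditive_incrementSize [AddGroup Z] (e : Z →+ X) {f : X → ℝ} (hf : Measurable f) :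
    IsEvenSubadditive (incrementSize π e f) where
  add_le x y := by
    have hy : incrementSize π e f y = eLpNorm (fun p => f (p + e x + e y) - f (p + e x)) 2 π :=
      (eLpNorm_comp_measurePreserving (g := fun p => f (p + e y) - f p)
        (by fun_prop) (measurePreserving_add_right π (e x))).symm
    rw [hy, incrementSize, incrementSize, add_comm]
    refine (eLpNorm_add_le (by fun_prop) (by fun_prop) one_le_two).trans_eq' ?_
    congr 1 with p
    simp [add_assoc]
  neg x := by
    have hx : incrementSize π e f (-x) =
        eLpNorm (fun p => f (p + e x + e (-x)) - f (p + e x)) 2 π :=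
      (eLpNorm_comp_measurePreserving (g := fun p => f (p + e (-x)) - f p)
        (by fun_prop) (measurePreserving_add_right π (e x))).symm
    rw [hx, incrementSize, ← eLpNorm_neg]
    congr 1 with p
    simp

lemma enorm_increment_sq [MeasurableSpace Z] [IsProbabilityMeasure π] {α : Measure Z}
    [IsProbabilityMeasure α] {e : Z → X} (he : Measurable e) (f : X →₂[π] ℝ) :
    ‖increment α he f‖ₑ ^ 2 = ∫⁻ z, incrementSize π e f z ^ 2 ∂α := by
  have : Measurable f := (Lp.stronglyMeasurable f).measurable
  have hsq := eLpNorm_nnreal_pow_eq_lintegral (μ := α.prod π) (p := 2)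
    (f := fun q => f (q.2 + e q.1) - f q.2) two_ne_zero
  simp only [incrementSize_sq, Lp.enorm_def, eLpNorm_congr_ae (increment_ae he f)]
  rw [← lintegral_prod (fun q : Z × X => ‖f (q.2 + e q.1) - f q.2‖ₑ ^ 2) (by fun_prop)]
  simpa using hsq

lemma exists_norm_increment_sq_le [IsProbabilityMeasure π] {E : Type*} [NormedAddCommGroup E]
    [NormedSpace ℝ E] [FiniteDimensional ℝ E] [MeasurableSpace E] [BorelSpace E]
    {ν : Measure E} [ν.IsAddHaarMeasure] {ρ : E → ℝ≥0∞} (hρ : Measurable ρ)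
    [IsProbabilityMeasure (ν.withDensity ρ)] {κ : Measure E} [IsProbabilityMeasure κ] {R : ℝ}
    (hκ : ∀ᵐ z ∂κ, ‖z‖ ≤ R) {e : E →+ X} (he : Measurable e) :
    ∃ C > 0, ∀ f : X →₂[π] ℝ,
      ‖increment κ he f‖ ^ 2 ≤ C * ‖increment (ν.withDensity ρ) he f‖ ^ 2 := by
  have hρ0 : ∫⁻ z, ρ z ∂ν ≠ 0 := by
    rw [← setLIntegral_univ, ← withDensity_apply _ MeasurableSet.univ, measure_univ]
    exact one_ne_zero
  obtain ⟨C, hC, hbound⟩ := exists_forall_sq_le_lintegral_withDensity hρ hρ0 R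
  refine ⟨C.toReal + 1, by positivity, fun f => ?_⟩
  have hf : Measurable f := (Lp.stronglyMeasurable f).measurable
  have hle : ‖increment κ he f‖ₑ ^ 2 ≤ C * ‖increment (ν.withDensity ρ) he f‖ₑ ^ 2 := by
    rw [enorm_increment_sq, enorm_increment_sq]
    calc ∫⁻ z, incrementSize π e f z ^ 2 ∂κ
        ≤ ∫⁻ _, C * ∫⁻ z, incrementSize π e f z ^ 2 ∂(ν.withDensity ρ) ∂κ :=
          lintegral_mono_ae (hκ.mono fun z hz => hbound _ (measurable_incrementSize he hf)
            (isEvenSubadditive_incrementSize e hf) z hz)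
      _ = C * ∫⁻ z, incrementSize π e f z ^ 2 ∂(ν.withDensity ρ) := by simp
  have hreal := ENNReal.toReal_mono (by finiteness) hle
  simp only [ENNReal.toReal_mul, ENNReal.toReal_pow, toReal_enorm] at hreal
  linarith [sq_nonneg ‖increment (ν.withDensity ρ) he f‖]

end Comparison

section UnitPrimitive

variable {u v g h : ℝ → ℝ}

/-- `u` is an absolutely continuous primitive of `g` on the unit interval. -/
def IsUnitPrimitive (u g : ℝ → ℝ) : Prop :=
  ∀ s ∈ Icc (0 : ℝ) 1, u s = u 0 + ∫ t in (0 : ℝ)..s, g t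

lemma uIcc_zero_subset {s : ℝ} (hs : s ∈ Icc (0 : ℝ) 1) : uIcc 0 s ⊆ uIcc (0 : ℝ) 1 :=
  uIcc_subset_uIcc_left (by rwa [uIcc_of_le zero_le_one])

lemma intervalIntegrable_of_mem_unit (hg : IntervalIntegrable g volume 0 1) {s : ℝ}
    (hs : s ∈ Icc (0 : ℝ) 1) : IntervalIntegrable g volume 0 s :=
  hg.mono_set (uIcc_zero_subset hs)

namespace IsUnitPrimitive

lemma integral_eq (hu : IsUnitPrimitive u g) : ∫ t in (0 : ℝ)..1, g t = u 1 - u 0 :=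
  eq_sub_of_add_eq' (hu 1 (right_mem_Icc.mpr zero_le_one)).symm

lemma congr_right (hu : IsUnitPrimitive u g) (hgh : ∀ᵐ t, t ∈ Ioc (0 : ℝ) 1 → g t = h t) :
    IsUnitPrimitive u h := fun s hs => by
  rw [hu s hs]
  refine congrArg _ (intervalIntegral.integral_congr_ae ?_)
  filter_upwards [hgh] with t ht hts
  rw [uIoc_of_le hs.1] at hts
  exact ht ⟨hts.1, hts.2.trans hs.2⟩

lemma add (hu : IsUnitPrimitive u g) (hv : IsUnitPrimitive v h)
    (hg : IntervalIntegrable g volume 0 1) (hh : IntervalIntegrable h volume 0 1) :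
    IsUnitPrimitive (fun s => u s + v s) fun s => g s + h s := fun s hs => by
  beta_reduce
  rw [intervalIntegral.integral_add (intervalIntegrable_of_mem_unit hg hs)
    (intervalIntegrable_of_mem_unit hh hs), hu s hs, hv s hs]
  ring

lemma sub (hu : IsUnitPrimitive u g) (hv : IsUnitPrimitive v h)
    (hg : IntervalIntegrable g volume 0 1) (hh : IntervalIntegrable h volume 0 1) :
    IsUnitPrimitive (fun s => u s - v s) fun s => g s - h s := fun s hs => by
  beta_reduce
  rw [intervalIntegral.integral_sub (intervalIntegrable_of_mem_unit hg hs)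
    (intervalIntegrable_of_mem_unit hh hs), hu s hs, hv s hs]
  ring

lemma mul (hu : IsUnitPrimitive u g) (hv : IsUnitPrimitive v h)
    (hg : IntervalIntegrable g volume 0 1) (hh : IntervalIntegrable h volume 0 1) :
    IsUnitPrimitive (fun s => u s * v s) fun s => g s * v s + u s * h s := by
  intro s hs
  have hg := intervalIntegrable_of_mem_unit hg hs
  have hh := intervalIntegrable_of_mem_unit hh hs
  let U := fun s => u 0 + ∫ t in (0 : ℝ)..s, g t
  let V := fun s => v 0 + ∫ t in (0 : ℝ)..s, h t
  have hconst (c : ℝ) : AbsolutelyContinuousOnInterval (fun _ => c) 0 s :=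
    (LipschitzWith.const c).lipschitzOnWith.absolutelyContinuousOnInterval (K := 0)
  have hU : AbsolutelyContinuousOnInterval U 0 s :=
    (hconst _).add (hg.absolutelyContinuousOnInterval_intervalIntegral left_mem_uIcc)
  have hV : AbsolutelyContinuousOnInterval V 0 s :=
    (hconst _).add (hh.absolutelyContinuousOnInterval_intervalIntegral left_mem_uIcc)
  have hparts := hU.integral_deriv_mul_eq_sub hV
  beta_reduce
  rw [hu s hs, hv s hs, ← sub_eq_iff_eq_add']
  simp only [U, V, intervalIntegral.integral_same, add_zero] at hparts
  rw [← hparts]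
  refine intervalIntegral.integral_congr_ae ?_
  filter_upwards [hg.ae_hasDerivAt_integral, hh.ae_hasDerivAt_integral] with t hgt hht ht
  have htu := uIoc_subset_uIcc ht
  have ht1 : t ∈ Icc (0 : ℝ) 1 := by simpa using uIcc_zero_subset hs htu
  rw [((hgt htu 0 left_mem_uIcc).const_add _).deriv, ((hht htu 0 left_mem_uIcc).const_add _).deriv,
    hu t ht1, hv t ht1]

lemma integral_mul_eq_zero (hu : IsUnitPrimitive u g) (hg : IntervalIntegrable g volume 0 1)
    (hper : u 1 = u 0) : ∫ t in (0 : ℝ)..1, g t * u t = 0 := by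
  have hsq := (hu.mul hu hg hg).integral_eq
  simp only [hper, sub_self, mul_comm (u _) (g _), ← two_mul] at hsq
  simpa using hsq

end IsUnitPrimitive

lemma isUnitPrimitive_exp (c : ℝ) :
    IsUnitPrimitive (fun s => Real.exp (c * s)) fun s => c * Real.exp (c * s) := fun s _ => by
  rw [← sub_eq_iff_eq_add', eq_comm]
  exact intervalIntegral.integral_eq_sub_of_hasDerivAt
    (fun t _ => by simpa [mul_comm] using ((hasDerivAt_id t).const_mul c).exp)
    (Continuous.intervalIntegrable (by fun_prop) _ _)

lemma isUnitPrimitive_integral_Iic (hg : IntegrableOn g (Iic 1)) :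
    IsUnitPrimitive (fun s => ∫ t in Iic s, g t) g := fun s hs => by
  have hmono {r : ℝ} (hr : r ≤ 1) : IntegrableOn g (Iic r) := hg.mono_set (Iic_subset_Iic.mpr hr)
  rw [← intervalIntegral.integral_Iic_sub_Iic (hmono zero_le_one) (hmono hs.2)]
  ring

end UnitPrimitive

section ExponentialAverage

open ProbabilityTheory

variable {r : ℝ} {g : ℝ → ℝ}

lemma measurable_exponentialPDF (r : ℝ) : Measurable (exponentialPDF r) :=
  (measurable_exponentialPDFReal r).ennreal_ofReal

lemma exponentialPDF_toReal_smul_sub (hr : 0 < r) (g : ℝ → ℝ) (s t : ℝ) :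
    (exponentialPDF r t).toReal • g (s - t) =
      Real.exp (-r * s) * (Iic s).indicator (fun τ => r * Real.exp (r * τ) * g τ) (s - t) := by
  rw [exponentialPDF_eq, smul_eq_mul]
  by_cases ht : 0 ≤ t
  · have hexp : Real.exp (-(r * t)) = Real.exp (-r * s) * Real.exp (r * (s - t)) := by
      rw [← Real.exp_add]
      ring_nf
    rw [if_pos ht, ENNReal.toReal_ofReal (by positivity), indicator_of_mem (by simpa using ht),
      hexp]
    ring
  · simp [ht]

lemma integral_expMeasure_sub (hr : 0 < r) (g : ℝ → ℝ) (s : ℝ) :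
    ∫ t, g (s - t) ∂expMeasure r =
      Real.exp (-r * s) * ∫ τ in Iic s, r * Real.exp (r * τ) * g τ := by
  have hdens : expMeasure r = volume.withDensity (exponentialPDF r) := rfl
  rw [hdens, integral_withDensity_eq_integral_toReal_smul (measurable_exponentialPDF r)
    (.of_forall fun _ => ENNReal.ofReal_lt_top)]
  simp only [exponentialPDF_toReal_smul_sub hr]
  rw [integral_const_mul, integral_sub_left_eq_self (Set.indicator _ _),
    integral_indicator measurableSet_Iic]

lemma integrable_expMeasure_sub_iff (hr : 0 < r) (s : ℝ) :
    Integrable (fun t => g (s - t)) (expMeasure r) ↔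
      IntegrableOn (fun τ => r * Real.exp (r * τ) * g τ) (Iic s) := by
  have hdens : expMeasure r = volume.withDensity (exponentialPDF r) := rfl
  rw [hdens, integrable_withDensity_iff_integrable_smul' (measurable_exponentialPDF r)
    (.of_forall fun _ => ENNReal.ofReal_lt_top)]
  simp only [exponentialPDF_toReal_smul_sub hr]
  rw [integrable_const_mul_iff (Real.exp_pos _).ne'.isUnit,
    ← integrable_indicator_iff measurableSet_Iic]
  exact integrable_comp_sub_left (Set.indicator _ _) s

/-- The average of `g` over an exponentially distributed past solves `U' = r * (g - U)`. -/
lemma isUnitPrimitive_integral_expMeasure_sub (hr : 0 < r) {s₀ : ℝ} (hs₀ : 1 ≤ s₀)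
    (hg : Integrable (fun t => g (s₀ - t)) (expMeasure r)) :
    IsUnitPrimitive (fun s => ∫ t, g (s - t) ∂expMeasure r)
      fun s => r * (g s - ∫ t, g (s - t) ∂expMeasure r) := by
  let k : ℝ → ℝ := fun τ => r * Real.exp (r * τ) * g τ
  have hk : IntegrableOn k (Iic 1) :=
    ((integrable_expMeasure_sub_iff hr s₀).mp hg).mono_set (Iic_subset_Iic.mpr hs₀)
  have hk01 : IntervalIntegrable k volume 0 1 :=
    (intervalIntegrable_iff_integrableOn_Ioc_of_le zero_le_one).mpr
      (hk.mono_set Ioc_subset_Iic_self)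
  simp only [integral_expMeasure_sub hr]
  convert (isUnitPrimitive_exp (-r)).mul (isUnitPrimitive_integral_Iic hk)
    (Continuous.intervalIntegrable (by fun_prop) _ _) hk01 using 2 with s
  have hexp : Real.exp (-r * s) * Real.exp (r * s) = 1 := by
    rw [← Real.exp_add]
    simp
  simp only [k]
  linear_combination -(r * g s) * hexp

end ExponentialAverage

section TimePrimitive

variable {T : Type*} [MeasurableSpace T] {τ : Measure T}
  {u v g h : T × UnitAddCircle → ℝ}

/-- `u` is a time-periodic primitive of `g` along almost every time fibre of `T × 𝕋`. -/
def IsTimePrimitive (τ : Measure T) (u g : T × UnitAddCircle → ℝ) : Prop :=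
  ∀ᵐ x ∂τ, IsUnitPrimitive (fun s => u (x, (s : UnitAddCircle))) fun s => g (x, s)

lemma intervalIntegrable_coe_circle {f : UnitAddCircle → ℝ} (hf : Integrable f) :
    IntervalIntegrable (fun t : ℝ => f t) volume 0 1 := by
  rw [intervalIntegrable_iff_integrableOn_Ioc_of_le zero_le_one]
  simpa using! (UnitAddCircle.measurePreserving_mk 0).integrable_comp_of_integrable
    (by simpa using hf)

lemma intervalIntegral_coe_circle (f : UnitAddCircle → ℝ) :
    ∫ t in (0 : ℝ)..1, f t = ∫ σ, f σ := by
  simpa using UnitAddCircle.intervalIntegral_preimage 0 f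

lemma ae_coe_of_ae_circle {p : UnitAddCircle → Prop} (hp : ∀ᵐ σ, p σ) :
    ∀ᵐ t : ℝ, t ∈ Ioc (0 : ℝ) 1 → p t := by
  rw [← ae_restrict_iff' measurableSet_Ioc]
  simpa using (UnitAddCircle.measurePreserving_mk 0).quasiMeasurePreserving.ae hp

namespace IsTimePrimitive

lemma congr_right (hu : IsTimePrimitive τ u g) (hgh : g =ᵐ[τ.prod volume] h) :
    IsTimePrimitive τ u h := by
  filter_upwards [hu, Measure.ae_ae_of_ae_prod hgh] with x hx hghx
  exact hx.congr_right (ae_coe_of_ae_circle hghx)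

lemma ae_eq_of_ae_eq_zero (hu : IsTimePrimitive τ u g) (hg : g =ᵐ[τ.prod volume] 0) :
    ∀ᵐ x ∂τ, ∀ σ, u (x, σ) = u (x, 0) := by
  filter_upwards [hu.congr_right hg] with x hx σ
  obtain ⟨s, hs, rfl⟩ := AddCircle.coe_image_Icc_eq (1 : ℝ) 0 ▸ mem_univ σ
  simpa using hx s (by simpa using hs)

variable [SFinite τ]

lemma add (hu : IsTimePrimitive τ u g) (hv : IsTimePrimitive τ v h)
    (hg : Integrable g (τ.prod volume)) (hh : Integrable h (τ.prod volume)) :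
    IsTimePrimitive τ (fun p => u p + v p) fun p => g p + h p := by
  filter_upwards [hu, hv, hg.prod_right_ae, hh.prod_right_ae] with x hux hvx hgx hhx
  exact hux.add hvx (intervalIntegrable_coe_circle hgx) (intervalIntegrable_coe_circle hhx)

lemma sub (hu : IsTimePrimitive τ u g) (hv : IsTimePrimitive τ v h)
    (hg : Integrable g (τ.prod volume)) (hh : Integrable h (τ.prod volume)) :
    IsTimePrimitive τ (fun p => u p - v p) fun p => g p - h p := by
  filter_upwards [hu, hv, hg.prod_right_ae, hh.prod_right_ae] with x hux hvx hgx hhx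
  exact hux.sub hvx (intervalIntegrable_coe_circle hgx) (intervalIntegrable_coe_circle hhx)

lemma integral_eq_zero (hu : IsTimePrimitive τ u g)
    (hg : Integrable g (τ.prod volume)) : ∫ p, g p ∂(τ.prod volume) = 0 := by
  rw [integral_prod g hg]
  refine integral_eq_zero_of_ae ?_
  filter_upwards [hu] with x hx
  simpa [← intervalIntegral_coe_circle, AddCircle.coe_period] using hx.integral_eq

lemma integral_mul_eq_zero (hu : IsTimePrimitive τ u g)
    (hg : Integrable g (τ.prod volume)) (hgu : Integrable (fun p => g p * u p) (τ.prod volume)) :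
    ∫ p, g p * u p ∂(τ.prod volume) = 0 := by
  rw [integral_prod _ hgu]
  refine integral_eq_zero_of_ae ?_
  filter_upwards [hu, hg.prod_right_ae] with x hx hgx
  rw [← intervalIntegral_coe_circle]
  exact hx.integral_mul_eq_zero (intervalIntegrable_coe_circle hgx) (by simp [AddCircle.coe_period])

end IsTimePrimitive

end TimePrimitive

section TimeAverage

instance {X Y : Type*} [Add X] [MeasurableSpace X] [MeasurableAdd₂ X] [Add Y] [MeasurableSpace Y]
    [MeasurableAdd₂ Y] : MeasurableAdd₂ (X × Y) where
  measurable_add := (measurable_fst.fst.add measurable_snd.fst).prodMk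
    (measurable_fst.snd.add measurable_snd.snd)

instance : IsProbabilityMeasure (volume : Measure UnitAddCircle) :=
  ⟨UnitAddCircle.measure_univ⟩

open ProbabilityTheory

variable {T : Type*} [AddCommGroup T] [MeasurableSpace T]

/-- The displacement of `T × 𝕋` backwards in time. -/
def timeShift (T : Type*) [AddCommGroup T] (t : ℝ) : T × UnitAddCircle := (0, -t)

lemma measurable_timeShift : Measurable (timeShift T) := by
  have := AddCircle.measurable_mk' (a := (1 : ℝ))
  exact measurable_const.prodMk this.neg

variable [MeasurableAdd₂ T] {τ : Measure T} [IsProbabilityMeasure τ] [τ.IsAddLeftInvariant]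
  {r : ℝ}

lemma isTimePrimitive_integral_timeShift (hr : 0 < r) {h : T × UnitAddCircle → ℝ}
    (hh : Integrable h (τ.prod volume)) :
    IsTimePrimitive τ (fun p => ∫ t, h (p + timeShift T t) ∂expMeasure r)
      fun p => r * (h p - ∫ t, h (p + timeShift T t) ∂expMeasure r) := by
  have := isProbabilityMeasure_expMeasure hr
  have hshift : Integrable (fun q : ℝ × T × UnitAddCircle => h (q.2 + timeShift T q.1))
      ((expMeasure r).prod (τ.prod volume)) :=
    (measurePreserving_add_displacement _ measurable_timeShift).integrable_comp_of_integrable hh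
  filter_upwards [Measure.ae_ae_of_ae_prod hshift.prod_left_ae] with x hx
  obtain ⟨σ, hσ⟩ := hx.exists
  obtain ⟨s₀, hs₀, rfl⟩ := AddCircle.coe_image_Icc_eq (1 : ℝ) 1 ▸ mem_univ σ
  have hpast (s t : ℝ) :
      (x, (s : UnitAddCircle)) + timeShift T t = (x, ((s - t : ℝ) : UnitAddCircle)) := by
    simp [timeShift, sub_eq_add_neg]
  simp only [hpast] at hσ ⊢
  exact isUnitPrimitive_integral_expMeasure_sub (g := fun s : ℝ => h (x, s)) hr hs₀.1 hσ

end TimeAverage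

section Coercive

variable {H : Type*} [NormedAddCommGroup H] [InnerProductSpace ℝ H]

lemma norm_add_smul_sq_le {B : H →L[ℝ] H} {c ε : ℝ} (hB : ∀ f, ⟪B f, f⟫ ≤ -c * ‖f‖ ^ 2)
    (hε : 0 ≤ ε) (f : H) :
    ‖f + ε • B f‖ ^ 2 ≤ (1 - 2 * c * ε + ε ^ 2 * ‖B‖ ^ 2) * ‖f‖ ^ 2 := by
  have hBf : ‖B f‖ ^ 2 ≤ ‖B‖ ^ 2 * ‖f‖ ^ 2 := by
    rw [← mul_pow]
    exact pow_le_pow_left₀ (norm_nonneg _) (B.le_opNorm f) 2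
  rw [norm_add_sq_real, real_inner_smul_right, real_inner_comm, norm_smul, Real.norm_of_nonneg hε,
    mul_pow]
  nlinarith [mul_le_mul_of_nonneg_left hBf (sq_nonneg ε), mul_le_mul_of_nonneg_left (hB f) hε]

lemma exists_norm_one_add_smul_lt_one {B : H →L[ℝ] H} {c : ℝ} (hc : 0 < c)
    (hB : ∀ f, ⟪B f, f⟫ ≤ -c * ‖f‖ ^ 2) : ∃ ε : ℝ, 0 < ε ∧ ‖1 + ε • B‖ < 1 := by
  let ε := c / (c ^ 2 + ‖B‖ ^ 2)
  have hden : 0 < c ^ 2 + ‖B‖ ^ 2 := by positivity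
  have hε : 0 < ε := by positivity
  have hmin : ε ^ 2 * (c ^ 2 + ‖B‖ ^ 2) = c * ε := by
    simp only [ε]
    field_simp
  have hq : 0 ≤ 1 - c * ε := by
    have : c * ε ≤ 1 := by
      rw [← mul_div_assoc, div_le_one hden]
      nlinarith [sq_nonneg ‖B‖]
    linarith
  refine ⟨ε, hε, lt_of_le_of_lt (b := √(1 - c * ε)) ?_ ?_⟩
  · refine ContinuousLinearMap.opNorm_le_bound _ (Real.sqrt_nonneg _) fun f => ?_
    refine le_of_sq_le_sq ?_ (by positivity)
    rw [mul_pow, Real.sq_sqrt hq]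
    refine (norm_add_smul_sq_le hB hε.le f).trans ?_
    gcongr
    nlinarith [sq_nonneg (ε * c)]
  · rw [Real.sqrt_lt' one_pos]
    nlinarith [mul_pos hc hε]

end Coercive

section TimeMean

lemma continuous_periodic_lift {f : ℝ → ℝ} (hf : Continuous f) (hper : Function.Periodic f 1) :
    Continuous (hper.lift : UnitAddCircle → ℝ) :=
  hf.quotient_lift _

lemma exists_continuous_isUnitPrimitive {m : UnitAddCircle → ℝ} (hm : Integrable m)
    (hm0 : ∫ σ, m σ = 0) : ∃ q : UnitAddCircle → ℝ, Continuous q ∧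
      IsUnitPrimitive (fun s => q s) fun s => m s := by
  have hper : Function.Periodic (fun t : ℝ => m t) 1 := fun t => by simp
  have hint (a b : ℝ) : IntervalIntegrable (fun t : ℝ => m t) volume a b :=
    hper.intervalIntegrable₀ one_ne_zero (intervalIntegrable_coe_circle hm) a b
  have hqper : Function.Periodic (fun s : ℝ => ∫ t in (0 : ℝ)..s, m t) 1 := fun s => by
    have hperiod : ∫ t in s..s + 1, m t = 0 := by
      rw [hper.intervalIntegral_add_eq s 0, zero_add, intervalIntegral_coe_circle, hm0]
    beta_reduce
    rw [← intervalIntegral.integral_add_adjacent_intervals (hint 0 s) (hint s (s + 1)), hperiod,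
      add_zero]
  refine ⟨hqper.lift, continuous_periodic_lift
    (intervalIntegral.continuous_primitive hint 0) hqper, fun s _ => ?_⟩
  simp only [Function.Periodic.lift_coe, intervalIntegral.integral_same, zero_add]

end TimeMean

section Evolution

open ProbabilityTheory

variable {T : Type*} [AddCommGroup T]

/-- The displacement of `T × 𝕋` in the space variable. -/
def spaceShift (T : Type*) [AddCommGroup T] : T →+ T × UnitAddCircle := AddMonoidHom.inl T _

variable [MeasurableSpace T]

lemma measurable_spaceShift : Measurable (spaceShift T) :=
  measurable_prodMk_right

lemma measurable_spaceShift_comp {E : Type*} [AddCommGroup E] [MeasurableSpace E] {e : E →+ T}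
    (he : Measurable e) : Measurable ((spaceShift T).comp e) :=
  measurable_spaceShift.comp he

/-- The square integrable functions on `T × 𝕋`, where `T` is the space and `𝕋` the time circle. -/
abbrev SpaceTimeL2 (τ : Measure T) := (T × UnitAddCircle) →₂[τ.prod volume] ℝ

variable [MeasurableAdd₂ T] {τ : Measure T} [IsProbabilityMeasure τ] [τ.IsAddLeftInvariant]

/-- The spatial increments of an `L²` function on `T × 𝕋`, between all pairs of points with the
same time coordinate. -/
def spaceIncrement (τ : Measure T) [IsProbabilityMeasure τ] [τ.IsAddLeftInvariant] :
    SpaceTimeL2 τ →L[ℝ]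
      ((T × T × UnitAddCircle) →₂[τ.prod (τ.prod volume)] ℝ) :=
  increment τ measurable_spaceShift

/-- The spatial mean of an `L²` function on `T × 𝕋`. -/
def spaceMean (τ : Measure T) [IsProbabilityMeasure τ] [τ.IsAddLeftInvariant] :
    SpaceTimeL2 τ →L[ℝ] SpaceTimeL2 τ :=
  averageOp τ measurable_spaceShift

lemma spaceMean_ae (f : SpaceTimeL2 τ) :
    spaceMean τ f =ᵐ[τ.prod volume] fun p => ∫ y, f (y, p.2) ∂τ := by
  filter_upwards [averageOp_ae (α := τ) measurable_spaceShift f]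
    with p hp
  have hinv := integral_add_left_eq_self (μ := τ) (fun y => f (y, p.2)) p.1
  rw [← hinv]
  simpa [spaceMean, spaceShift, Prod.add_def] using hp

lemma increment_eq_zero_of_snd {Z : Type*} [MeasurableSpace Z] {α : Measure Z}
    [IsProbabilityMeasure α] {e : Z → T × UnitAddCircle} (he : Measurable e)
    (he₂ : ∀ z, (e z).2 = 0) {f : SpaceTimeL2 τ} {q : UnitAddCircle → ℝ}
    (hf : f =ᵐ[τ.prod volume] fun p => q p.2) : increment α he f = 0 := by
  refine Lp.eq_zero_iff_ae_eq_zero.mpr ?_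
  filter_upwards [increment_ae (α := α) he f,
    (measurePreserving_add_displacement α he).quasiMeasurePreserving.ae hf,
    measurePreserving_snd.quasiMeasurePreserving.ae hf] with p hinc hdisp hp
  rw [hinc, hdisp, hp, Prod.snd_add, he₂, add_zero, sub_self, Pi.zero_apply]

lemma ae_eq_integral_of_spaceIncrement_eq_zero {f : SpaceTimeL2 τ} (hf : spaceIncrement τ f = 0) :
    f =ᵐ[τ.prod volume] fun p => ∫ y, f (y, p.2) ∂τ := by
  have hmean : spaceMean τ f = f := averageOp_eq_self_of_increment_eq_zero _ hf
  simpa only [hmean] using spaceMean_ae f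

/-- The properties of a nonlocal diffusion in the space variable of `T × 𝕋` on which solvability of
the time-periodic evolution equation rests. -/
structure IsSpaceDiffusion (A : SpaceTimeL2 τ →L[ℝ] SpaceTimeL2 τ) (c : ℝ) : Prop where
  inner_self_le : ∀ f, ⟪A f, f⟫ ≤ -c * ‖spaceIncrement τ f‖ ^ 2
  map_eq_zero : ∀ f, spaceIncrement τ f = 0 → A f = 0
  integral_eq_zero : ∀ f, ∫ p, A f p ∂(τ.prod volume) = 0

/-- Solved by a Neumann series around the resolvent of the time derivative. -/
lemma exists_isTimePrimitive_of_coercive {B : SpaceTimeL2 τ →L[ℝ] SpaceTimeL2 τ} {c : ℝ}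
    (hc : 0 < c) (hB : ∀ f, ⟪B f, f⟫ ≤ -c * ‖f‖ ^ 2) (θ : SpaceTimeL2 τ) :
    ∃ (u : T × UnitAddCircle → ℝ) (f : SpaceTimeL2 τ), Measurable u ∧
      f =ᵐ[τ.prod volume] u ∧ IsTimePrimitive τ u fun p => B f p + θ p := by
  obtain ⟨ε, hε, hK⟩ := exists_norm_one_add_smul_lt_one hc hB
  have := isProbabilityMeasure_expMeasure (inv_pos.mpr hε)
  let E := averageOp (π := τ.prod volume) (expMeasure ε⁻¹) (measurable_timeShift (T := T))
  have hKE : ‖(1 + ε • B) * E‖ < 1 :=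
    (norm_mul_le _ _).trans_lt (mul_lt_one_of_nonneg_of_lt_one_left (norm_nonneg _) hK
      (norm_averageOp_le _))
  obtain ⟨h, hh⟩ : ∃ h, (1 - (1 + ε • B) * E) h = ε • θ :=
    (ContinuousLinearMap.isUnit_iff_bijective.mp (isUnit_one_sub_of_norm_lt_one hKE)).2 _
  have hEh := averageOp_ae (α := expMeasure ε⁻¹) measurable_timeShift h
  have hmeas : Measurable fun p => ∫ t, h (p + timeShift T t) ∂expMeasure ε⁻¹ := by
    have hjoint : Measurable fun q : (T × UnitAddCircle) × ℝ => h (q.1 + timeShift T q.2) :=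
      (Lp.stronglyMeasurable h).measurable.comp
        (measurable_fst.add (measurable_timeShift.comp measurable_snd))
    exact hjoint.stronglyMeasurable.integral_prod_right'.measurable
  refine ⟨_, E h, hmeas, hEh,
    (isTimePrimitive_integral_timeShift (inv_pos.mpr hε) (integrable_coeFn_L2 h)).congr_right ?_⟩
  have hrhs : ε⁻¹ • (h - E h) = B (E h) + θ := by
    have hh' : h - (E h + ε • B (E h)) = ε • θ := hh
    rw [inv_smul_eq_iff₀ hε.ne', smul_add, ← hh']
    abel
  filter_upwards [hEh, Lp.coeFn_smul ε⁻¹ (h - E h), Lp.coeFn_sub h (E h), Lp.coeFn_add (B (E h)) θ]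
    with p hE hsmul hsub hadd
  rw [← hE, ← Pi.add_apply, ← hadd, ← hrhs, hsmul, Pi.smul_apply, hsub, Pi.sub_apply, smul_eq_mul]

namespace IsSpaceDiffusion

variable {A : SpaceTimeL2 τ →L[ℝ] SpaceTimeL2 τ} {c : ℝ}

lemma inner_sub_spaceMean_le (hA : IsSpaceDiffusion A c)
    (f : SpaceTimeL2 τ) :
    ⟪(A - (2 * c) • spaceMean τ) f, f⟫ ≤ -(2 * c) * ‖f‖ ^ 2 := by
  have hinc : ‖spaceIncrement τ f‖ ^ 2 = 2 * (‖f‖ ^ 2 - ⟪spaceMean τ f, f⟫) := norm_increment_sq _ f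
  have hself := hA.inner_self_le f
  rw [sub_apply, smul_apply, inner_sub_left, real_inner_smul_left]
  rw [hinc] at hself
  linarith

lemma integral_eq_zero_of_isTimePrimitive (hA : IsSpaceDiffusion A c) {f θ : SpaceTimeL2 τ}
    {u : T × UnitAddCircle → ℝ} (hu : IsTimePrimitive τ u fun p => A f p + θ p) :
    ∫ p, θ p ∂(τ.prod volume) = 0 := by
  have hint := hu.integral_eq_zero ((integrable_coeFn_L2 _).add (integrable_coeFn_L2 _))
  rwa [integral_add (integrable_coeFn_L2 _) (integrable_coeFn_L2 _), hA.integral_eq_zero,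
    zero_add] at hint

lemma spaceIncrement_eq_zero_of_isTimePrimitive (hA : IsSpaceDiffusion A c) (hc : 0 < c)
    {f : SpaceTimeL2 τ} {u : T × UnitAddCircle → ℝ} (hfu : f =ᵐ[τ.prod volume] u)
    (hu : IsTimePrimitive τ u (A f)) : spaceIncrement τ f = 0 := by
  have henergy : ⟪A f, f⟫ = ∫ p, A f p * u p ∂(τ.prod volume) := by
    rw [real_inner_comm, L2.inner_def]
    refine integral_congr_ae ?_
    filter_upwards [hfu] with p hp
    rw [← hp, RCLike.inner_apply, conj_trivial]
  have hint : Integrable (fun p => A f p * u p) (τ.prod volume) :=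
    ((Lp.memLp (A f)).integrable_mul (Lp.memLp f)).congr (hfu.mono fun p hp => by simp [hp])
  have hself := hA.inner_self_le f
  rw [henergy, hu.integral_mul_eq_zero (integrable_coeFn_L2 _) hint] at hself
  exact norm_eq_zero.mp (pow_eq_zero_iff two_ne_zero |>.mp
    (le_antisymm (by nlinarith) (sq_nonneg _)))

lemma ae_eq_const_of_isTimePrimitive (hA : IsSpaceDiffusion A c) (hc : 0 < c)
    {f : SpaceTimeL2 τ} {u : T × UnitAddCircle → ℝ} (hfu : f =ᵐ[τ.prod volume] u)
    (hu : IsTimePrimitive τ u (A f)) : ∃ k, ∀ᵐ p ∂(τ.prod volume), u p = k := by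
  have hinc := hA.spaceIncrement_eq_zero_of_isTimePrimitive hc hfu hu
  have htime : ∀ᵐ x ∂τ, ∀ σ, u (x, σ) = u (x, 0) :=
    hu.ae_eq_of_ae_eq_zero (Lp.eq_zero_iff_ae_eq_zero.mp (hA.map_eq_zero f hinc))
  have hspace : ∀ᵐ p ∂(τ.prod volume), u p = ∫ y, f (y, p.2) ∂τ := by
    filter_upwards [hfu, ae_eq_integral_of_spaceIncrement_eq_zero hinc] with p hp hmean
    rw [← hp, hmean]
  obtain ⟨x₀, htime₀, hspace₀⟩ := (htime.and (Measure.ae_ae_of_ae_prod hspace)).exists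
  refine ⟨u (x₀, 0), ?_⟩
  filter_upwards [hspace, measurePreserving_snd.quasiMeasurePreserving.ae hspace₀] with p hp hp₀
  rw [hp, ← hp₀, htime₀]

lemma exists_ae_sub_eq_const (hA : IsSpaceDiffusion A c) (hc : 0 < c) {f g θ : SpaceTimeL2 τ}
    {u v : T × UnitAddCircle → ℝ} (hfu : f =ᵐ[τ.prod volume] u) (hgv : g =ᵐ[τ.prod volume] v)
    (hu : IsTimePrimitive τ u fun p => A f p + θ p)
    (hv : IsTimePrimitive τ v fun p => A g p + θ p) :
    ∃ k, ∀ᵐ p ∂(τ.prod volume), u p - v p = k := by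
  have hint (h : SpaceTimeL2 τ) : Integrable (fun p => A h p + θ p) (τ.prod volume) :=
    (integrable_coeFn_L2 _).add (integrable_coeFn_L2 _)
  have hfg : ⇑(f - g) =ᵐ[τ.prod volume] fun p => u p - v p :=
    (Lp.coeFn_sub f g).trans (hfu.sub hgv)
  refine hA.ae_eq_const_of_isTimePrimitive hc hfg ((hu.sub hv (hint f) (hint g)).congr_right ?_)
  filter_upwards [Lp.coeFn_sub (A f) (A g)] with p hp
  rw [map_sub, hp, Pi.sub_apply, add_sub_add_right_eq_sub]

lemma exists_isTimePrimitive_sub_mean (hA : IsSpaceDiffusion A c) (hc : 0 < c)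
    (θ : SpaceTimeL2 τ) :
    ∃ (u : T × UnitAddCircle → ℝ) (f : SpaceTimeL2 τ), Measurable u ∧ f =ᵐ[τ.prod volume] u ∧
      IsTimePrimitive τ u fun p => (A f p + θ p) - 2 * c * ∫ y, f (y, p.2) ∂τ := by
  obtain ⟨u, f, hu, hfu, hprim⟩ := exists_isTimePrimitive_of_coercive (by positivity)
    hA.inner_sub_spaceMean_le θ
  refine ⟨u, f, hu, hfu, hprim.congr_right ?_⟩
  filter_upwards [spaceMean_ae f, Lp.coeFn_sub (A f) ((2 * c) • spaceMean τ f),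
    Lp.coeFn_smul (2 * c) (spaceMean τ f)] with p hmean hsub hsmul
  rw [sub_apply, smul_apply, hsub, Pi.sub_apply, hsmul, Pi.smul_apply, hmean, smul_eq_mul]
  ring

/-- The multiple of the spatial mean is compensated by adding its primitive in time, which does not
depend on space and is therefore annihilated by `A`. -/
lemma exists_isTimePrimitive (hA : IsSpaceDiffusion A c) (hc : 0 < c) {θ : SpaceTimeL2 τ}
    (hθ : ∫ p, θ p ∂(τ.prod volume) = 0) :
    ∃ (u : T × UnitAddCircle → ℝ) (f : SpaceTimeL2 τ), Measurable u ∧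
      f =ᵐ[τ.prod volume] u ∧ IsTimePrimitive τ u fun p => A f p + θ p := by
  obtain ⟨u, f, hu, hfu, hprim⟩ := hA.exists_isTimePrimitive_sub_mean hc θ
  let m : UnitAddCircle → ℝ := fun σ => 2 * c * ∫ y, f (y, σ) ∂τ
  have hm : Integrable m := (integrable_coeFn_L2 f).integral_prod_right.const_mul (2 * c)
  have hrhs : Integrable (fun p => A f p + θ p) (τ.prod volume) :=
    (integrable_coeFn_L2 _).add (integrable_coeFn_L2 _)
  have hm0 : ∫ σ, m σ = 0 := by
    have hint := hprim.integral_eq_zero (hrhs.sub (hm.comp_snd τ))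
    rw [integral_sub hrhs (hm.comp_snd τ), integral_add (integrable_coeFn_L2 _)
      (integrable_coeFn_L2 _), hA.integral_eq_zero, hθ, integral_fun_snd m] at hint
    simpa using hint
  obtain ⟨q, hq, hqm⟩ := exists_continuous_isUnitPrimitive hm hm0
  have hq2 : MemLp (fun p : T × UnitAddCircle => q p.2) 2 (τ.prod volume) :=
    (hq.memLp_of_hasCompactSupport (.of_compactSpace q)).comp_snd τ
  have hAq : A hq2.toLp = 0 :=
    hA.map_eq_zero _ (increment_eq_zero_of_snd _ (fun _ => rfl) hq2.coeFn_toLp)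
  refine ⟨fun p => u p + q p.2, f + hq2.toLp, hu.add (hq.measurable.comp measurable_snd), ?_, ?_⟩
  · filter_upwards [hfu, hq2.coeFn_toLp, Lp.coeFn_add f hq2.toLp] with p hp hqp hadd
    rw [hadd, Pi.add_apply, hp, hqp]
  · have hqprim : IsTimePrimitive τ (fun p => q p.2) fun p => m p.2 := .of_forall fun _ => hqm
    simpa [map_add, hAq, m] using hprim.add hqprim (hrhs.sub (hm.comp_snd τ)) (hm.comp_snd τ)

end IsSpaceDiffusion

end Evolution

/-- `A` is the operator on `L²(T × 𝕋)` induced by the operator `L` on functions. -/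
def IsInducedBy {T : Type*} [MeasurableSpace T] {τ : Measure T} (A : SpaceTimeL2 τ → SpaceTimeL2 τ)
    (L : (T × UnitAddCircle → ℝ) → T × UnitAddCircle → ℝ) : Prop :=
  ∀ (f : SpaceTimeL2 τ) (u : T × UnitAddCircle → ℝ),
    f =ᵐ[τ.prod volume] u → A f =ᵐ[τ.prod volume] L u

section JumpDiffusion

variable {T : Type*} [AddCommGroup T] [MeasurableSpace T] [MeasurableAdd₂ T] {τ : Measure T}
  [IsProbabilityMeasure τ] [τ.IsAddLeftInvariant]
  {E : Type*} [NormedAddCommGroup E] [NormedSpace ℝ E] [FiniteDimensional ℝ E] [MeasurableSpace E]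
  [BorelSpace E] {ν : Measure E} [ν.IsAddHaarMeasure] {ρ : E → ℝ≥0∞}
  [IsProbabilityMeasure (ν.withDensity ρ)] [(ν.withDensity ρ).IsNegInvariant]

/-- A bounded set of displacements already covers the whole space `T`, so the increments along the
jumps control all increments in space. -/
lemma exists_isSpaceDiffusion_jumpOp (hρ : Measurable ρ) {e : E →+ T} {κ : Measure E}
    [IsProbabilityMeasure κ] {R : ℝ} (hκ : ∀ᵐ z ∂κ, ‖z‖ ≤ R) (heκ : MeasurePreserving e κ τ)
    {m : Lp ℝ ∞ ((ν.withDensity ρ).prod (τ.prod volume))} {c : ℝ} (hc : 0 < c)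
    (hmc : ∀ᵐ q ∂((ν.withDensity ρ).prod (τ.prod volume)), c ≤ m q)
    (hm : m ∘ reverseJump ((spaceShift T).comp e) =ᵐ[(ν.withDensity ρ).prod (τ.prod volume)] m) :
    ∃ c' > 0, IsSpaceDiffusion
      (jumpOp (measurable_spaceShift_comp heκ.measurable) m) c' := by
  have he := measurable_spaceShift_comp heκ.measurable
  obtain ⟨C, hC, hgap⟩ := exists_norm_increment_sq_le (π := τ.prod volume) (ν := ν) hρ hκ he
  refine ⟨c / (2 * C), by positivity, fun f => ?_, fun f hf => ?_, integral_jumpOp he hm⟩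
  · have hspace : ‖spaceIncrement τ f‖ ^ 2 ≤ C * ‖increment (ν.withDensity ρ) he f‖ ^ 2 := by
      rw [spaceIncrement, ← norm_increment_comp measurable_spaceShift heκ]
      exact hgap f
    calc ⟪jumpOp he m f, f⟫ ≤ -(c / 2) * ‖increment (ν.withDensity ρ) he f‖ ^ 2 :=
          inner_jumpOp_self_le he hm hmc f
      _ = -(c / (2 * C)) * (C * ‖increment (ν.withDensity ρ) he f‖ ^ 2) := by field_simp
      _ ≤ -(c / (2 * C)) * ‖spaceIncrement τ f‖ ^ 2 :=
          mul_le_mul_of_nonpos_left hspace (by simp only [Left.neg_nonpos_iff]; positivity)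
  · exact jumpOp_eq_zero_of_increment_eq_zero he m (increment_eq_zero_of_snd
      (q := fun σ => ∫ y, f (y, σ) ∂τ) he (fun _ => rfl)
      (ae_eq_integral_of_spaceIncrement_eq_zero hf))

lemma exists_isSpaceDiffusion_jumpIntegral (hρ : Measurable ρ) {e : E →+ T} {κ : Measure E}
    [IsProbabilityMeasure κ] {R : ℝ} (hκ : ∀ᵐ z ∂κ, ‖z‖ ≤ R) (heκ : MeasurePreserving e κ τ)
    {r : E × T × UnitAddCircle → ℝ} (hr : MemLp r ∞ ((ν.withDensity ρ).prod (τ.prod volume)))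
    {c : ℝ} (hc : 0 < c) (hrc : ∀ q, c ≤ r q)
    (hrev : r ∘ reverseJump ((spaceShift T).comp e) = r) :
    ∃ (A : SpaceTimeL2 τ →L[ℝ] SpaceTimeL2 τ) (c' : ℝ), 0 < c' ∧ IsSpaceDiffusion A c' ∧
      IsInducedBy A (jumpIntegral (ν.withDensity ρ) ((spaceShift T).comp e) r) := by
  have hrate : hr.toLp r =ᵐ[(ν.withDensity ρ).prod (τ.prod volume)] r := hr.coeFn_toLp
  have hsymm : hr.toLp r ∘ reverseJump ((spaceShift T).comp e)
      =ᵐ[(ν.withDensity ρ).prod (τ.prod volume)] hr.toLp r := by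
    have hcomp := (measurePreserving_reverseJump (measurable_spaceShift_comp
      heκ.measurable)).quasiMeasurePreserving.ae_eq_comp hrate
    rw [hrev] at hcomp
    exact hcomp.trans hrate.symm
  obtain ⟨c', hc', hA⟩ := exists_isSpaceDiffusion_jumpOp hρ hκ heκ hc
    (hrate.mono fun q hq => hq ▸ hrc q) hsymm
  exact ⟨_, c', hc', hA, fun f u hfu => jumpOp_ae _ hrate hfu⟩

end JumpDiffusion

section Solvability

variable {T : Type*} [MeasurableSpace T] {τ : Measure T}
  {L : (T × UnitAddCircle → ℝ) → T × UnitAddCircle → ℝ} {θ u v : T × UnitAddCircle → ℝ}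

lemma isTimePrimitive_iff_toLp {A : SpaceTimeL2 τ → SpaceTimeL2 τ} (hAL : IsInducedBy A L)
    (hθ : MemLp θ 2 (τ.prod volume)) {f : SpaceTimeL2 τ} (hfu : f =ᵐ[τ.prod volume] u) :
    IsTimePrimitive τ u (fun p => L u p + θ p) ↔
      IsTimePrimitive τ u fun p => A f p + hθ.toLp θ p := by
  have hrhs : (fun p => A f p + hθ.toLp θ p) =ᵐ[τ.prod volume] fun p => L u p + θ p :=
    (hAL f u hfu).add hθ.coeFn_toLp
  exact ⟨fun h => h.congr_right hrhs.symm, fun h => h.congr_right hrhs⟩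

namespace IsSpaceDiffusion

variable [AddCommGroup T] [MeasurableAdd₂ T] [IsProbabilityMeasure τ] [τ.IsAddLeftInvariant]
  {A : SpaceTimeL2 τ →L[ℝ] SpaceTimeL2 τ} {c : ℝ}

theorem exists_isTimePrimitive_iff (hA : IsSpaceDiffusion A c) (hc : 0 < c)
    (hAL : IsInducedBy A L) (hθ : MemLp θ 2 (τ.prod volume)) :
    (∃ u, Measurable u ∧ MemLp u 2 (τ.prod volume) ∧
      IsTimePrimitive τ u fun p => L u p + θ p) ↔ ∫ p, θ p ∂(τ.prod volume) = 0 := by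
  rw [← integral_congr_ae hθ.coeFn_toLp]
  constructor
  · rintro ⟨u, -, hu, hprim⟩
    exact hA.integral_eq_zero_of_isTimePrimitive
      ((isTimePrimitive_iff_toLp hAL hθ hu.coeFn_toLp).mp hprim)
  · intro hmean
    obtain ⟨u, f, hu, hfu, hprim⟩ := hA.exists_isTimePrimitive hc hmean
    exact ⟨u, hu, (memLp_congr_ae hfu).mp (Lp.memLp f),
      (isTimePrimitive_iff_toLp hAL hθ hfu).mpr hprim⟩

theorem exists_ae_sub_eq_const_of_memLp (hA : IsSpaceDiffusion A c) (hc : 0 < c)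
    (hAL : IsInducedBy A L) (hθ : MemLp θ 2 (τ.prod volume))
    (hu : MemLp u 2 (τ.prod volume)) (hv : MemLp v 2 (τ.prod volume))
    (hup : IsTimePrimitive τ u fun p => L u p + θ p)
    (hvp : IsTimePrimitive τ v fun p => L v p + θ p) :
    ∃ k, ∀ᵐ p ∂(τ.prod volume), u p - v p = k :=
  hA.exists_ae_sub_eq_const hc hu.coeFn_toLp hv.coeFn_toLp
    ((isTimePrimitive_iff_toLp hAL hθ hu.coeFn_toLp).mp hup)
    ((isTimePrimitive_iff_toLp hAL hθ hv.coeFn_toLp).mp hvp)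

end IsSpaceDiffusion

end Solvability

section Torus

variable {d : ℕ}

/-- The projection of `ℝ^d` onto the torus `𝕋^d`. -/
def toTorus (d : ℕ) : (Fin d → ℝ) →+ UnitAddTorus (Fin d) :=
  (QuotientAddGroup.mk' (AddSubgroup.zmultiples (1 : ℝ))).compLeft (Fin d)

lemma toTorus_apply (ξ : Fin d → ℝ) (i : Fin d) : toTorus d ξ i = (ξ i : UnitAddCircle) := rfl

/-- The representative in `[0,1)` of a point of the circle. -/
def circleRep (σ : UnitAddCircle) : ℝ := AddCircle.equivIco 1 0 σ

/-- The representative in `[0,1)^d` of a point of the torus. -/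
def torusRep (x : UnitAddTorus (Fin d)) : Fin d → ℝ := fun i => circleRep (x i)

lemma measurable_circleRep : Measurable circleRep :=
  measurable_subtype_coe.comp (AddCircle.measurableEquivIco 1 0).measurable

lemma measurable_torusRep : Measurable (torusRep (d := d)) :=
  measurable_pi_lambda _ fun i => measurable_circleRep.comp (measurable_pi_apply i)

lemma coe_circleRep (σ : UnitAddCircle) : (circleRep σ : UnitAddCircle) = σ :=
  AddCircle.coe_equivIco

lemma circleRep_coe (s : ℝ) : circleRep s = Int.fract s :=
  (AddCircle.coe_equivIco_mk_apply 1 s).trans (by rw [div_one, mul_one])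

lemma toTorus_torusRep (x : UnitAddTorus (Fin d)) : toTorus d (torusRep x) = x :=
  funext fun i => coe_circleRep (x i)

lemma exists_torusRep_toTorus_eq (ξ : Fin d → ℝ) :
    ∃ k : Fin d → ℤ, torusRep (toTorus d ξ) = ξ + fun i => (k i : ℝ) :=
  ⟨fun i => -⌊ξ i⌋, funext fun i => by
    simp [torusRep, toTorus_apply, circleRep_coe, Int.fract, sub_eq_add_neg]⟩

lemma torusRep_toTorus_of_mem_cube {ξ : Fin d → ℝ} (hξ : ξ ∈ cube d) :
    torusRep (toTorus d ξ) = ξ :=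
  funext fun i => by
    rw [torusRep, toTorus_apply, circleRep_coe, Int.fract_eq_self.mpr (hξ i (mem_univ i))]

lemma measurePreserving_toTorus_Ico (a : Fin d → ℝ) : MeasurePreserving (toTorus d)
    (volume.restrict (univ.pi fun i => Ico (a i) (a i + 1))) volume := by
  have hcircle (i : Fin d) : MeasurePreserving ((↑) : ℝ → UnitAddCircle)
      (volume.restrict (Ico (a i) (a i + 1))) volume := by
    rw [restrict_Ico_eq_restrict_Ioc]
    exact UnitAddCircle.measurePreserving_mk (a i)
  rw [volume_pi (α := fun _ : Fin d => ℝ), Measure.restrict_pi_pi]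
  exact measurePreserving_pi (β := fun _ => UnitAddCircle) _ (fun _ => volume) hcircle

lemma measurePreserving_toTorus_cube :
    MeasurePreserving (toTorus d) (volume.restrict (cube d)) volume := by
  simpa [cube] using measurePreserving_toTorus_Ico (0 : Fin d → ℝ)

lemma measurableSet_cube : MeasurableSet (cube d) :=
  .univ_pi fun _ => measurableSet_Ico

instance : IsProbabilityMeasure (volume.restrict (cube d)) :=
  ⟨by simp [cube, Real.volume_pi_Ico]⟩

lemma ae_norm_le_one_cube : ∀ᵐ z ∂(volume.restrict (cube d)), ‖z‖ ≤ 1 :=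
  (ae_restrict_mem measurableSet_cube).mono fun z hz =>
    (pi_norm_le_iff_of_nonneg zero_le_one).mpr fun i => by
      rw [Real.norm_of_nonneg (hz i (mem_univ i)).1]
      exact (hz i (mem_univ i)).2.le

lemma measurePreserving_torusRep :
    MeasurePreserving (torusRep (d := d)) volume (volume.restrict (cube d)) := by
  refine ⟨measurable_torusRep, ?_⟩
  rw [← measurePreserving_toTorus_cube.map_eq,
    Measure.map_map measurable_torusRep measurePreserving_toTorus_cube.measurable]
  refine (Measure.map_congr ?_).trans Measure.map_id
  filter_upwards [ae_restrict_mem measurableSet_cube] with ξ hξ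
  exact torusRep_toTorus_of_mem_cube hξ

lemma ae_toTorus_iff {P : UnitAddTorus (Fin d) → Prop} :
    (∀ᵐ ξ, P (toTorus d ξ)) ↔ ∀ᵐ x, P x := by
  refine ⟨fun h => ?_, fun h => ?_⟩
  · filter_upwards [measurePreserving_torusRep.quasiMeasurePreserving.ae (ae_restrict_of_ae h)]
      with x hx
    rwa [toTorus_torusRep] at hx
  · have hcover : ⋃ k : Fin d → ℤ, univ.pi (fun i => Ico (k i : ℝ) (k i + 1)) = univ :=
      eq_univ_of_forall fun ξ => mem_iUnion.mpr
        ⟨fun i => ⌊ξ i⌋, fun i _ => ⟨Int.floor_le _, Int.lt_floor_add_one _⟩⟩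
    rw [← Measure.restrict_univ (μ := volume), ← hcover, ae_restrict_iUnion_iff]
    exact fun k => (measurePreserving_toTorus_Ico _).quasiMeasurePreserving.ae h

/-- The projection of `ℝ^d × ℝ` onto `𝕋^d × 𝕋`. -/
def toSpaceTime (p : (Fin d → ℝ) × ℝ) : UnitAddTorus (Fin d) × UnitAddCircle :=
  (toTorus d p.1, p.2)

lemma measurePreserving_toSpaceTime : MeasurePreserving (toSpaceTime (d := d))
    (volume.restrict (cube d ×ˢ Ioo 0 1)) (volume.prod volume) := by
  have hcircle :
      MeasurePreserving ((↑) : ℝ → UnitAddCircle) (volume.restrict (Ioo 0 1)) volume := by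
    simpa [restrict_Ioo_eq_restrict_Ioc] using UnitAddCircle.measurePreserving_mk 0
  rw [Measure.volume_eq_prod, ← Measure.prod_restrict]
  exact measurePreserving_toTorus_cube.prod hcircle

end Torus

section Descent

variable {d : ℕ}

lemma toSpaceTime_add (ξ z : Fin d → ℝ) (s : ℝ) :
    toSpaceTime (ξ + z, s) = toSpaceTime (ξ, s) + (spaceShift _).comp (toTorus d) z := by
  simp [toSpaceTime, spaceShift]

lemma toSpaceTime_rep (p : UnitAddTorus (Fin d) × UnitAddCircle) :
    toSpaceTime (torusRep p.1, circleRep p.2) = p :=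
  Prod.ext (toTorus_torusRep p.1) (coe_circleRep p.2)

lemma comp_circleRep_coe {f : ℝ → ℝ} (hf : Function.Periodic f 1) (s : ℝ) :
    f (circleRep s) = f s := by
  rw [circleRep_coe, Int.fract]
  simpa only [mul_one] using hf.sub_int_mul_eq ⌊s⌋

/-- The functions on `ℝ^d × ℝ` that represent the elements of `L²(𝕋^{d+1})`. -/
structure IsPeriodicL2 (f : (Fin d → ℝ) → ℝ → ℝ) : Prop where
  measurable : Measurable fun p : (Fin d → ℝ) × ℝ => f p.1 p.2
  add_int : ∀ ξ s, ∀ k : Fin d → ℤ, f (ξ + fun i => (k i : ℝ)) s = f ξ s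
  add_one : ∀ ξ s, f ξ (s + 1) = f ξ s
  integrableOn_sq : IntegrableOn (fun p : (Fin d → ℝ) × ℝ => f p.1 p.2 ^ 2) (cube d ×ˢ Ioo 0 1)

/-- The function on `𝕋^d × 𝕋` induced by a periodic function on `ℝ^d × ℝ`. -/
def descend (f : (Fin d → ℝ) → ℝ → ℝ) (p : UnitAddTorus (Fin d) × UnitAddCircle) : ℝ :=
  f (torusRep p.1) (circleRep p.2)

lemma isPeriodicL2_toSpaceTime_iff {u : UnitAddTorus (Fin d) × UnitAddCircle → ℝ}
    (hu : Measurable u) : IsPeriodicL2 (fun ξ s => u (toSpaceTime (ξ, s))) ↔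
      MemLp u 2 (volume.prod volume) := by
  have hsq : Integrable (fun p => u p ^ 2) (volume.prod volume) ↔
      IntegrableOn (fun p => u (toSpaceTime p) ^ 2) (cube d ×ˢ Ioo 0 1) :=
    (measurePreserving_toSpaceTime.integrable_comp (hu.pow_const 2).aestronglyMeasurable).symm
  rw [memLp_two_iff_integrable_sq hu.aestronglyMeasurable, hsq]
  refine ⟨fun h => h.integrableOn_sq,
    fun h => ⟨hu.comp measurePreserving_toSpaceTime.measurable, fun ξ s k => ?_, fun ξ s => ?_, h⟩⟩
  · congr 1
    ext i <;> simp [toSpaceTime, toTorus_apply]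
  · simp [toSpaceTime]

namespace IsPeriodicL2

variable {f : (Fin d → ℝ) → ℝ → ℝ}

lemma measurable_descend (hf : IsPeriodicL2 f) : Measurable (descend f) :=
  hf.measurable.comp ((measurable_torusRep.comp measurable_fst).prodMk
    (measurable_circleRep.comp measurable_snd))

lemma descend_toSpaceTime (hf : IsPeriodicL2 f) (ξ : Fin d → ℝ) (s : ℝ) :
    descend f (toSpaceTime (ξ, s)) = f ξ s := by
  obtain ⟨k, hk⟩ := exists_torusRep_toTorus_eq ξ
  rw [descend, toSpaceTime, hk, hf.add_int, comp_circleRep_coe (hf.add_one ξ)]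

lemma memLp_descend (hf : IsPeriodicL2 f) : MemLp (descend f) 2 (volume.prod volume) :=
  (isPeriodicL2_toSpaceTime_iff hf.measurable_descend).mp
    (by simpa only [hf.descend_toSpaceTime] using hf)

lemma integral_descend (hf : IsPeriodicL2 f) :
    ∫ p, descend f p ∂(volume.prod volume) = ∫ p in cube d ×ˢ Ioo 0 1, f p.1 p.2 := by
  rw [← measurePreserving_toSpaceTime.map_eq, integral_map
    measurePreserving_toSpaceTime.measurable.aemeasurable
    hf.measurable_descend.aestronglyMeasurable]
  exact integral_congr_ae (.of_forall fun p => hf.descend_toSpaceTime p.1 p.2)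

end IsPeriodicL2

end Descent

section CellProblem

variable {d : ℕ} {a : (Fin d → ℝ) → ℝ} {μ : (Fin d → ℝ) → (Fin d → ℝ) → ℝ → ℝ} {m M : ℝ}

/-- `a` is the density of a symmetric probability law of jumps. -/
structure IsJumpDensity (a : (Fin d → ℝ) → ℝ) : Prop where
  measurable : Measurable a
  nonneg : ∀ z, 0 ≤ a z
  integral_eq_one : ∫ z, a z = 1
  even : ∀ z, a (-z) = a z

/-- The law of the jumps with density `a`. -/
abbrev jumpLaw (a : (Fin d → ℝ) → ℝ) : Measure (Fin d → ℝ) :=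
  volume.withDensity fun z => ENNReal.ofReal (a z)

namespace IsJumpDensity

lemma isProbabilityMeasure_jumpLaw (ha : IsJumpDensity a) : IsProbabilityMeasure (jumpLaw a) :=
  ⟨by rw [withDensity_apply _ .univ, setLIntegral_univ, ← ofReal_integral_eq_lintegral_ofReal
    (integrable_of_integral_eq_one ha.integral_eq_one) (.of_forall ha.nonneg), ha.integral_eq_one,
    ENNReal.ofReal_one]⟩

lemma isNegInvariant_jumpLaw (ha : IsJumpDensity a) : (jumpLaw a).IsNegInvariant where
  neg_eq_self := by
    ext s hs
    have hpre := (Measure.measurePreserving_neg volume).setLIntegral_comp_preimage hs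
      ha.measurable.ennreal_ofReal
    simp only [ha.even] at hpre
    rw [Measure.neg_apply, withDensity_apply _ hs, withDensity_apply _ hs.neg, ← hpre]
    rfl

lemma integral_jumpLaw (ha : IsJumpDensity a) (f : (Fin d → ℝ) → ℝ) :
    ∫ z, f z ∂(jumpLaw a) = ∫ z, a z * f z := by
  rw [integral_withDensity_eq_integral_toReal_smul ha.measurable.ennreal_ofReal
    (.of_forall fun _ => ENNReal.ofReal_lt_top)]
  simp only [ENNReal.toReal_ofReal (ha.nonneg _), smul_eq_mul]

lemma Aop_eq_integral_jumpLaw (ha : IsJumpDensity a) (s : ℝ) (v : (Fin d → ℝ) → ℝ)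
    (ξ : Fin d → ℝ) :
    Aop a μ s v ξ = ∫ z, μ ξ (ξ + z) s * (v (ξ + z) - v ξ) ∂(jumpLaw a) := by
  rw [ha.integral_jumpLaw, Aop, ← integral_add_left_eq_self _ ξ]
  congr 1 with z
  rw [sub_add_cancel_left, ha.even, mul_assoc]

end IsJumpDensity

/-- `μ` is a bounded symmetric jump rate, invariant under joint integer translations of its two
space variables and under those of time. -/
structure IsJumpRate (μ : (Fin d → ℝ) → (Fin d → ℝ) → ℝ → ℝ) (m M : ℝ) : Prop where
  measurable : Measurable fun p : (Fin d → ℝ) × (Fin d → ℝ) × ℝ => μ p.1 p.2.1 p.2.2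
  add_int : ∀ ξ η s, ∀ k : Fin d → ℤ,
    μ (ξ + fun i => (k i : ℝ)) (η + fun i => (k i : ℝ)) s = μ ξ η s
  add_one : ∀ ξ η s, μ ξ η (s + 1) = μ ξ η s
  symm : ∀ ξ η s, μ ξ η s = μ η ξ s
  le : ∀ ξ η s, m ≤ μ ξ η s
  ge : ∀ ξ η s, μ ξ η s ≤ M

/-- The rate of the jump `z` from the point `p` of `𝕋^d × 𝕋`, for the pair `q = (z, p)`. -/
def jumpRate (μ : (Fin d → ℝ) → (Fin d → ℝ) → ℝ → ℝ)
    (q : (Fin d → ℝ) × UnitAddTorus (Fin d) × UnitAddCircle) : ℝ :=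
  μ (torusRep q.2.1) (torusRep q.2.1 + q.1) (circleRep q.2.2)

namespace IsJumpRate

lemma jumpRate_toSpaceTime (hμ : IsJumpRate μ m M) (ξ z : Fin d → ℝ) (s : ℝ) :
    jumpRate μ (z, toSpaceTime (ξ, s)) = μ ξ (ξ + z) s := by
  obtain ⟨k, hk⟩ := exists_torusRep_toTorus_eq ξ
  rw [jumpRate, toSpaceTime, hk, add_right_comm, hμ.add_int,
    comp_circleRep_coe (hμ.add_one ξ (ξ + z))]

lemma jumpRate_comp_reverseJump (hμ : IsJumpRate μ m M) :
    jumpRate μ ∘ reverseJump ((spaceShift _).comp (toTorus d)) = jumpRate μ := by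
  ext ⟨z, p⟩
  rw [← toSpaceTime_rep p, Function.comp_apply, reverseJump, ← toSpaceTime_add,
    hμ.jumpRate_toSpaceTime, hμ.jumpRate_toSpaceTime, add_neg_cancel_right, hμ.symm]

lemma measurable_jumpRate (hμ : IsJumpRate μ m M) : Measurable (jumpRate μ) := by
  have hrep : Measurable fun q : (Fin d → ℝ) × UnitAddTorus (Fin d) × UnitAddCircle =>
      torusRep q.2.1 := measurable_torusRep.comp measurable_snd.fst
  exact hμ.measurable.comp
    (hrep.prodMk ((hrep.add measurable_fst).prodMk (measurable_circleRep.comp measurable_snd.snd)))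

lemma memLp_jumpRate (hμ : IsJumpRate μ m M)
    (π : Measure ((Fin d → ℝ) × UnitAddTorus (Fin d) × UnitAddCircle)) :
    MemLp (jumpRate μ) ∞ π :=
  memLp_top_of_bound hμ.measurable_jumpRate.aestronglyMeasurable (max |m| |M|)
    (.of_forall fun _ => abs_le_max_abs_abs (hμ.le _ _ _) (hμ.ge _ _ _))

end IsJumpRate

/-- The operator `A` acting on functions on `𝕋^d × 𝕋`. -/
def torusOp (a : (Fin d → ℝ) → ℝ) (μ : (Fin d → ℝ) → (Fin d → ℝ) → ℝ → ℝ) :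
    (UnitAddTorus (Fin d) × UnitAddCircle → ℝ) → UnitAddTorus (Fin d) × UnitAddCircle → ℝ :=
  jumpIntegral (jumpLaw a) ((spaceShift _).comp (toTorus d)) (jumpRate μ)

lemma torusOp_toSpaceTime (ha : IsJumpDensity a) (hμ : IsJumpRate μ m M)
    (u : UnitAddTorus (Fin d) × UnitAddCircle → ℝ) (ξ : Fin d → ℝ) (s : ℝ) :
    torusOp a μ u (toSpaceTime (ξ, s)) = Aop a μ s (fun η => u (toSpaceTime (η, s))) ξ := by
  simp only [ha.Aop_eq_integral_jumpLaw, torusOp, jumpIntegral, hμ.jumpRate_toSpaceTime,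
    toSpaceTime_add]

lemma exists_isSpaceDiffusion_torusOp (ha : IsJumpDensity a) (hμ : IsJumpRate μ m M) (hm : 0 < m) :
    ∃ (A : SpaceTimeL2 (volume : Measure (UnitAddTorus (Fin d))) →L[ℝ] SpaceTimeL2 volume) (c : ℝ),
      0 < c ∧ IsSpaceDiffusion A c ∧ IsInducedBy A (torusOp a μ) := by
  have := ha.isProbabilityMeasure_jumpLaw
  have := ha.isNegInvariant_jumpLaw
  exact exists_isSpaceDiffusion_jumpIntegral ha.measurable.ennreal_ofReal
    ae_norm_le_one_cube measurePreserving_toTorus_cube (hμ.memLp_jumpRate _) hm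
    (fun q => hμ.le _ _ _) hμ.jumpRate_comp_reverseJump

variable {θ : (Fin d → ℝ) → ℝ → ℝ}

lemma IsCellSol.isPeriodicL2 {β : (Fin d → ℝ) → ℝ → ℝ} (hβ : IsCellSol a μ θ β) :
    IsPeriodicL2 β :=
  ⟨hβ.1, hβ.2.1, hβ.2.2.1, hβ.2.2.2.1⟩

lemma isCellSol_toSpaceTime_iff (ha : IsJumpDensity a) (hμ : IsJumpRate μ m M)
    (hθ : IsPeriodicL2 θ) {u : UnitAddTorus (Fin d) × UnitAddCircle → ℝ} (hu : Measurable u) :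
    IsCellSol a μ θ (fun ξ s => u (toSpaceTime (ξ, s))) ↔ MemLp u 2 (volume.prod volume) ∧
      IsTimePrimitive volume u fun p => torusOp a μ u p + descend θ p := by
  have hprim : IsTimePrimitive volume u (fun p => torusOp a μ u p + descend θ p) ↔
      ∀ᵐ ξ, IsUnitPrimitive (fun s => u (toSpaceTime (ξ, s)))
        fun s => Aop a μ s (fun η => u (toSpaceTime (η, s))) ξ + θ ξ s := by
    simp only [← torusOp_toSpaceTime ha hμ, ← hθ.descend_toSpaceTime]
    exact ae_toTorus_iff.symm
  rw [← isPeriodicL2_toSpaceTime_iff hu, hprim]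
  exact ⟨fun h => ⟨h.isPeriodicL2, h.2.2.2.2⟩,
    fun ⟨⟨hmeas, hint, hone, hsq⟩, h⟩ => ⟨hmeas, hint, hone, hsq, h⟩⟩

lemma IsCellSol.isTimePrimitive_descend {β : (Fin d → ℝ) → ℝ → ℝ} (hβ : IsCellSol a μ θ β)
    (ha : IsJumpDensity a) (hμ : IsJumpRate μ m M) (hθ : IsPeriodicL2 θ) :
    IsTimePrimitive volume (descend β) fun p => torusOp a μ (descend β) p + descend θ p := by
  refine ((isCellSol_toSpaceTime_iff ha hμ hθ hβ.isPeriodicL2.measurable_descend).mp ?_).2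
  simpa only [hβ.isPeriodicL2.descend_toSpaceTime] using hβ

lemma exists_isCellSol_iff (ha : IsJumpDensity a) (hμ : IsJumpRate μ m M)
    (hθ : IsPeriodicL2 θ) :
    (∃ β, IsCellSol a μ θ β) ↔ ∃ u, Measurable u ∧ MemLp u 2 (volume.prod volume) ∧
      IsTimePrimitive volume u fun p => torusOp a μ u p + descend θ p :=
  ⟨fun ⟨β, hβ⟩ => ⟨descend β, hβ.isPeriodicL2.measurable_descend, hβ.isPeriodicL2.memLp_descend,
    hβ.isTimePrimitive_descend ha hμ hθ⟩,
    fun ⟨_, hu, hsol⟩ => ⟨_, (isCellSol_toSpaceTime_iff ha hμ hθ hu).mpr hsol⟩⟩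

theorem stmt9_general (ha : IsJumpDensity a) (hμ : IsJumpRate μ m M) (hm : 0 < m)
    (hθ : IsPeriodicL2 θ) :
    ((∃ β, IsCellSol a μ θ β) ↔ ∫ p in cube d ×ˢ Ioo 0 1, θ p.1 p.2 = 0) ∧
      ∀ β₁ β₂, IsCellSol a μ θ β₁ → IsCellSol a μ θ β₂ →
        ∃ c : ℝ, ∀ᵐ p ∂(volume.restrict (cube d ×ˢ Ioo 0 1)), β₁ p.1 p.2 - β₂ p.1 p.2 = c := by
  obtain ⟨A, c, hc, hA, hAL⟩ := exists_isSpaceDiffusion_torusOp ha hμ hm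
  refine ⟨?_, fun β₁ β₂ hβ₁ hβ₂ => ?_⟩
  · rw [exists_isCellSol_iff ha hμ hθ, hA.exists_isTimePrimitive_iff hc hAL hθ.memLp_descend,
      hθ.integral_descend]
  · have hper₁ := hβ₁.isPeriodicL2
    have hper₂ := hβ₂.isPeriodicL2
    obtain ⟨k, hk⟩ := hA.exists_ae_sub_eq_const_of_memLp hc hAL hθ.memLp_descend
      hper₁.memLp_descend hper₂.memLp_descend
      (hβ₁.isTimePrimitive_descend ha hμ hθ) (hβ₂.isTimePrimitive_descend ha hμ hθ)
    refine ⟨k, (measurePreserving_toSpaceTime.quasiMeasurePreserving.ae hk).mono fun p hp => ?_⟩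
    rwa [hper₁.descend_toSpaceTime, hper₂.descend_toSpaceTime] at hp

end CellProblem

/-- The equation `∂_s β - A(s)β = θ` has a time-periodic solution
`β ∈ L²(𝕋^{d+1}) ∩ H¹((0,1); L²(𝕋^d))` iff `∫_{𝕋^{d+1}} θ = 0`; moreover any two
solutions differ by an additive constant. -/
theorem stmt9 {d : ℕ} (hd : 1 ≤ d)
    (a : (Fin d → ℝ) → ℝ) (μ : (Fin d → ℝ) → (Fin d → ℝ) → ℝ → ℝ) (μm μp : ℝ)
    (hameas : Measurable a) (hanonneg : ∀ z, 0 ≤ a z)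
    (haint : Integrable a) (hamass : ∫ z, a z = 1)
    (hamom : Integrable (fun z => ‖z‖ ^ 2 * a z))
    (hasymm : ∀ z, a (-z) = a z)
    (hμmeas : Measurable fun p : (Fin d → ℝ) × (Fin d → ℝ) × ℝ => μ p.1 p.2.1 p.2.2)
    (hμper₁ : ∀ ξ η s, ∀ k : Fin d → ℤ, μ (ξ + fun i => (k i : ℝ)) η s = μ ξ η s)
    (hμper₂ : ∀ ξ η s, ∀ k : Fin d → ℤ, μ ξ (η + fun i => (k i : ℝ)) s = μ ξ η s)
    (hμper₃ : ∀ ξ η s, μ ξ η (s + 1) = μ ξ η s)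
    (hμsymm : ∀ ξ η s, μ ξ η s = μ η ξ s)
    (hμm : 0 < μm) (hμlb : ∀ ξ η s, μm ≤ μ ξ η s) (hμub : ∀ ξ η s, μ ξ η s ≤ μp)
    (θ : (Fin d → ℝ) → ℝ → ℝ)
    (hθmeas : Measurable fun p : (Fin d → ℝ) × ℝ => θ p.1 p.2)
    (hθper₁ : ∀ ξ s, ∀ k : Fin d → ℤ, θ (ξ + fun i => (k i : ℝ)) s = θ ξ s)
    (hθper₂ : ∀ ξ s, θ ξ (s + 1) = θ ξ s)
    (hθL2 : IntegrableOn (fun p : (Fin d → ℝ) × ℝ => (θ p.1 p.2) ^ 2)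
      (cube d ×ˢ Set.Ioo (0 : ℝ) 1)) :
    ((∃ β, IsCellSol a μ θ β) ↔
      (∫ p in cube d ×ˢ Set.Ioo (0 : ℝ) 1, θ (Prod.fst p) (Prod.snd p)) = 0) ∧
    (∀ β₁ β₂, IsCellSol a μ θ β₁ → IsCellSol a μ θ β₂ →
      ∃ c : ℝ, ∀ᵐ p ∂(volume.restrict (cube d ×ˢ Set.Ioo (0 : ℝ) 1)),
        β₁ (Prod.fst p) (Prod.snd p) - β₂ (Prod.fst p) (Prod.snd p) = c) :=
  stmt9_general ⟨hameas, hanonneg, hamass, hasymm⟩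
    ⟨hμmeas, fun ξ η s k => by rw [hμper₁, hμper₂], hμper₃, hμsymm, hμlb, hμub⟩ hμm
    ⟨hθmeas, hθper₁, hθper₂, hθL2⟩
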